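/- Let x≠y∈V and π_i≥0 (i∈V) with π_x,π_y>0, and for ε>0 set ε=(π_i ε)_{i∈V}. Then the limits lim_{ε↓0} ε E_{μ^ε}[G^ε_xy] and lim_{ε↓0} (E_{μ^{ε_xδ_x}}[O^π_xy] + E_{μ^{ε_yδ_y}}[O^π_yx]) both exist, and 0 < lim_{ε↓0} ε E_{μ^ε}[G^ε_xy] ≤ lim_{ε↓0} (E_{μ^{ε_xδ_x}}[O^π_xy] + E_{μ^{ε_yδ_y}}[O^π_yx]) < ∞. -/

import Mathlib

/-!
The zero mode of `t` (a common translation of all `t_i`) is the only direction in which the measure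
degenerates as the pinning is removed, and translating it by `c` is the same as multiplying the
pinning by `e^{-c}` (`Phi_shift`, `Gfun_shift`). The proof isolates this mode.

*Marginal in `t`.* The variables `s` are Gaussian with precision matrix `A(t) + ε̂(t)`
(`integral_dens`), which leaves the weight `Phi` times the pinning energy. The weight of a tree
factorizes into a forest weight and one factor `ε_i e^{t_i}` per root (`wT_split`).

*The Green's function.* Translating the zero mode by `-log ε` replaces the pinning by `ε² π`. Then
every tree contribution to `ε E[G]` converges pointwise (`Fd_tendsto`): `det (A + v π̂) / v` tends to
`S τ` and `v (A + v π̂)⁻¹_{xy}` to `1 / S`, with `S = ∑ π_i e^{t_i}` and `τ` the common cofactor of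
the Laplacian, while trees with several roots vanish. A majorant uniform in `ε` is supplied by
`Fd_le`, which rests on the energy estimate `|(A + p̂)⁻¹_{xy}| ≤ (p_x e^{t_x} p_y e^{t_y})^{-1/2}`
(`inv_bound`) and on the comparison of determinants (`det_mono`). Summing over single-root trees,
dominated convergence gives the limit `∫ h₁(t) k(log S(t)) dt` with `h₁ > 0` invariant under
translations and `k(r) = e^{r/2} exp(-e^r/2)` (`first_limit`).

*The observable `O`.* With pinning at `x` only, each tree of positive weight has the single root
`x`, so the indicator in `O` equals one, and `E[O]` is `∫ h_S(t) ψ_c(t_x) dt` with `h_S` invariant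
under translations and `ψ_c(r) = √c e^{r/2} exp(-c (cosh r - 1))` (`expect_single`).

*Gauge exchange.* For translation-invariant `h` and functions `l`, `m` with `l(t + c) = l(t) + c`,
`m(t + c) = m(t) + c`, the integrals of `h φ(l)` and `h ψ(m)` are proportional to the masses of `φ`
and `ψ` (`gauge_exchange`). Both `k` and `ψ_c` have mass `√(2π)`. Hence `E[O]` does not depend on
`c` (`single_const`), and the first limit equals `∫ h₁(t) ψ_1(t_x) dt`. As
`S ≥ π_x e^{t_x} + π_y e^{t_y}` for `x ≠ y`, `h₁ ≤ h_S`, so already the first of the two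
expectations of `O` bounds the first limit.
-/

open MeasureTheory Real Filter
open scoped BigOperators

attribute [local instance] Classical.propDecidable

namespace H22

variable {V : Type*} [Fintype V] [DecidableEq V]

/-- The augmented graph `Γ_ρ`: add an extra vertex `ρ` (encoded by `none`)
joined to every vertex of the original graph. -/
def aug (G : SimpleGraph V) : SimpleGraph (Option V) :=
  SimpleGraph.fromRel (fun a b =>
    match a, b with
    | some i, some j => G.Adj i j
    | _, _ => True)

/-- `T` is (the edge set of) a spanning tree of `G`. -/
def IsSpanningTree {α : Type*} (G : SimpleGraph α) (T : Finset (Sym2 α)) : Prop :=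
  ↑T ⊆ G.edgeSet ∧ (SimpleGraph.fromEdgeSet (↑T : Set (Sym2 α))).IsTree

/-- The finset of all spanning trees of `G`. -/
noncomputable def STrees {α : Type*} [Fintype α] [DecidableEq α] (G : SimpleGraph α) :
    Finset (Finset (Sym2 α)) :=
  Finset.univ.filter (fun T => IsSpanningTree G T)

/-- Extension of a vector `t : V → ℝ` to `Option V` by `t_ρ := 0`. -/
def extV (t : V → ℝ) : Option V → ℝ := fun a => Option.elim a 0 t

/-- Lift of a (symmetrized) function of two vertices to unordered pairs. -/
noncomputable def esym {α : Type*} (f : α → α → ℝ) : Sym2 α → ℝ :=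
  Sym2.lift ⟨fun a b => (f a b + f b a) / 2, fun a b => by ring⟩

/-- Combined edge weights on the augmented graph: `β` on edges of `Γ`,
`ε_i` on the edge `i ∼ ρ`. -/
def bres (β : V → V → ℝ) (ε : V → ℝ) : Option V → Option V → ℝ := fun a b =>
  match a, b with
  | some i, some j => β i j
  | some i, none => ε i
  | none, some j => ε j
  | none, none => 0

/-- `B_{ij}(t,s) = cosh(t_i - t_j) + ½ (s_i - s_j)² e^{t_i+t_j}` on the augmented graph. -/
noncomputable def Bfun (t s : V → ℝ) (a b : Option V) : ℝ :=
  Real.cosh (extV t a - extV t b) +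
    (1 / 2) * (extV s a - extV s b) ^ 2 * Real.exp (extV t a + extV t b)

/-- Weight `β_{ij} e^{t_i+t_j}` of an edge of the augmented graph. -/
noncomputable def treeW (β : V → V → ℝ) (ε : V → ℝ) (t : V → ℝ) : Sym2 (Option V) → ℝ :=
  esym (fun a b => bres β ε a b * Real.exp (extV t a + extV t b))

/-- Gibbs factor `e^{-β_{ij}(B_{ij}(t,s)-1)}` of an edge of the augmented graph. -/
noncomputable def gibbs (β : V → V → ℝ) (ε : V → ℝ) (t s : V → ℝ) : Sym2 (Option V) → ℝ :=
  esym (fun a b => Real.exp (-(bres β ε a b * (Bfun t s a b - 1))))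

/-- The density of the measure `μ^ε` with respect to
(Lebesgue on `ℝ^V × ℝ^V`) × (counting measure on spanning trees). -/
noncomputable def dens (G : SimpleGraph V) (β : V → V → ℝ) (ε : V → ℝ)
    (t s : V → ℝ) (T : Finset (Sym2 (Option V))) : ℝ :=
  (∏ j, Real.exp (-t j) / (2 * Real.pi)) *
  (∏ e ∈ Finset.univ.filter (fun e : Sym2 (Option V) => e ∈ (aug G).edgeSet),
      gibbs β ε t s e) *
  (∏ e ∈ T, treeW β ε t e)

/-- Expectation of an observable `f(t,s,T)` under the measure `μ^ε`. -/
noncomputable def expect (G : SimpleGraph V) (β : V → V → ℝ) (ε : V → ℝ)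
    (f : (V → ℝ) → (V → ℝ) → Finset (Sym2 (Option V)) → ℝ) : ℝ :=
  ∑ T ∈ STrees (aug G), ∫ p : (V → ℝ) × (V → ℝ), dens G β ε p.1 p.2 T * f p.1 p.2 T

/-- The weighted graph Laplacian `A(t)` of `Γ`. -/
noncomputable def Amat (G : SimpleGraph V) (β : V → V → ℝ) (t : V → ℝ) : Matrix V V ℝ :=
  Matrix.of fun i j =>
    if i = j then ∑ k ∈ Finset.univ.filter (fun k => G.Adj k j), β k j * Real.exp (t k + t j)
    else if G.Adj i j then -(β i j * Real.exp (t i + t j)) else 0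

/-- The pinning diagonal matrix `ε̂(t) = diag(ε_i e^{t_i})`. -/
noncomputable def epsHat (ε : V → ℝ) (t : V → ℝ) : Matrix V V ℝ :=
  Matrix.diagonal fun i => ε i * Real.exp (t i)

/-- The Green's function `G^ε_{xy} = e^{t_x+t_y} (A(t)+ε̂(t))⁻¹_{xy}`. -/
noncomputable def Gfun (G : SimpleGraph V) (β : V → V → ℝ) (ε : V → ℝ)
    (t : V → ℝ) (x y : V) : ℝ :=
  Real.exp (t x + t y) * (Amat G β t + epsHat ε t)⁻¹ x y

/-- The edge `i ∼ ρ` of the augmented graph. -/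
def rootEdge (i : V) : Sym2 (Option V) := s(some i, none)

/-- The set of roots `R(T) = {i ∈ V : (i ∼ ρ) ∈ T}`. -/
noncomputable def roots (T : Finset (Sym2 (Option V))) : Finset V :=
  Finset.univ.filter fun i => rootEdge i ∈ T

/-- The forest `F(T) = T ∩ E`: edges of `T` not incident to `ρ`. -/
noncomputable def forestOf (T : Finset (Sym2 (Option V))) : Finset (Sym2 (Option V)) :=
  T.filter fun e => ¬ ((none : Option V) ∈ e)

/-- `x ↔_T y`: `x` and `y` are connected in `T` through a path not using `ρ`. -/
def connIn (T : Finset (Sym2 (Option V))) (x y : V) : Prop :=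
  (SimpleGraph.fromEdgeSet (↑(forestOf T) : Set (Sym2 (Option V)))).Reachable (some x) (some y)

/-- The observable `O^π_{xy}`. -/
noncomputable def obs (pv : V → ℝ) (x y : V) (t : V → ℝ)
    (T : Finset (Sym2 (Option V))) : ℝ :=
  Real.exp (t x + t y) / (pv x * Real.exp (t x) + pv y * Real.exp (t y)) *
    (if rootEdge x ∈ T ∧ connIn T x y then 1 else 0)

/-- The pinning `ε = (π_i ε)_{i ∈ V}`. -/
def pinOf (pv : V → ℝ) (ε : ℝ) : V → ℝ := fun i => pv i * ε

/-- The pinning `c δ_x` concentrated at the single vertex `x`. -/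
def singlePin (x : V) (c : ℝ) : V → ℝ := fun i => if i = x then c else 0

end H22

open scoped Topology

namespace H22

set_option linter.unusedSectionVars false

/-! ### Gaussian integrals and one-dimensional integrals -/

section Analysis

variable {V : Type*} [Fintype V] [DecidableEq V]

open scoped MatrixOrder in
/-- A positive definite real matrix factors as `Bᵀ B` with `B` invertible. -/
lemma posDef_factor {M : Matrix V V ℝ} (hM : M.PosDef) :
    ∃ B : Matrix V V ℝ, B.det ≠ 0 ∧ (∀ s : V → ℝ, s ⬝ᵥ (M.mulVec s) = ∑ i, (B.mulVec s i) ^ 2) ∧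
      M.det = B.det ^ 2 := by
  obtain ⟨B, hB⟩ := CStarAlgebra.nonneg_iff_eq_star_mul_self.mp hM.posSemidef.nonneg
  rw [Matrix.star_eq_conjTranspose, Matrix.conjTranspose_eq_transpose_of_trivial] at hB
  have hdet : M.det = B.det ^ 2 := by
    rw [hB, Matrix.det_mul, Matrix.det_transpose]; ring
  refine ⟨B, ?_, ?_, hdet⟩
  · intro h0
    have := hM.det_pos
    rw [hdet, h0] at this
    simp at this
  · intro s
    rw [hB, ← Matrix.mulVec_mulVec, Matrix.dotProduct_mulVec, Matrix.vecMul_transpose]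
    simp [dotProduct, sq]

lemma gauss {M : Matrix V V ℝ} (hM : M.PosDef) :
    Integrable (fun s : V → ℝ => Real.exp (-(1 / 2 * (s ⬝ᵥ (M.mulVec s))))) ∧
    ∫ s : V → ℝ, Real.exp (-(1 / 2 * (s ⬝ᵥ (M.mulVec s)))) =
      (√(2 * π)) ^ Fintype.card V / √M.det := by
  obtain ⟨B, hB, hq, hdet⟩ := posDef_factor hM
  have hmap := Real.map_matrix_volume_pi_eq_smul_volume_pi hB
  have hfun : (fun s : V → ℝ => Real.exp (-(1 / 2 * (s ⬝ᵥ (M.mulVec s))))) =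
      fun s => (fun q : V → ℝ => ∏ i, Real.exp (-(1 / 2) * q i ^ 2)) (Matrix.toLin' B s) := by
    funext s
    simp only [hq, Matrix.toLin'_apply, ← Real.exp_sum]
    rw [Finset.mul_sum, ← Finset.sum_neg_distrib]
    congr 1
    refine Finset.sum_congr rfl fun i _ => by ring
  have hcont : Continuous (fun q : V → ℝ => ∏ i, Real.exp (-(1 / 2) * q i ^ 2)) := by fun_prop
  have hlin : Measurable (Matrix.toLin' B) :=
    (LinearMap.continuous_of_finiteDimensional (Matrix.toLin' B)).measurable
  have hInt : Integrable (fun q : V → ℝ => ∏ i, Real.exp (-(1 / 2) * q i ^ 2)) :=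
    Integrable.fintype_prod (f := fun _ (x : ℝ) => Real.exp (-(1 / 2) * x ^ 2))
      (fun _ => integrable_exp_neg_mul_sq (by norm_num))
  rw [hfun]
  constructor
  · have h2 : Integrable (fun q : V → ℝ => ∏ i, Real.exp (-(1 / 2) * q i ^ 2))
        (Measure.map (Matrix.toLin' B) volume) := by
      rw [hmap]
      exact hInt.smul_measure ENNReal.ofReal_ne_top
    exact h2.comp_measurable hlin
  · rw [← integral_map hlin.aemeasurable hcont.aestronglyMeasurable, hmap, integral_smul_measure,
      integral_fintype_prod_volume_eq_prod (f := fun _ (x : ℝ) => Real.exp (-(1 / 2) * x ^ 2))]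
    simp only [integral_gaussian, Finset.prod_const, Finset.card_univ]
    rw [ENNReal.toReal_ofReal (abs_nonneg _), hdet, Real.sqrt_sq_eq_abs, abs_inv]
    have : π / (1 / 2) = 2 * π := by ring
    rw [this, smul_eq_mul]
    field_simp

/-- A positive definite form dominates a multiple of the Euclidean norm. -/
lemma posDef_coercive {M : Matrix V V ℝ} (hM : M.PosDef) :
    ∃ η : ℝ, 0 < η ∧ ∀ s : V → ℝ, η * ∑ i, s i ^ 2 ≤ s ⬝ᵥ (M.mulVec s) := by
  obtain ⟨B, hB, hq, -⟩ := posDef_factor hM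
  set C : ℝ := ∑ i, ∑ j, (B⁻¹ i j) ^ 2 with hC
  have hC0 : 0 ≤ C := by positivity
  refine ⟨(C + 1)⁻¹, by positivity, fun s => ?_⟩
  have h1 : ∑ i, s i ^ 2 ≤ C * ∑ i, (B.mulVec s i) ^ 2 := by
    rw [hC, Finset.sum_mul]
    refine Finset.sum_le_sum fun i _ => ?_
    have : s i = ∑ j, B⁻¹ i j * (B.mulVec s j) := by
      have h : B⁻¹.mulVec (B.mulVec s) = s := by
        rw [Matrix.mulVec_mulVec, Matrix.nonsing_inv_mul _ (isUnit_iff_ne_zero.mpr hB),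
          Matrix.one_mulVec]
      conv_lhs => rw [← h]
      rfl
    rw [this]
    exact Finset.sum_mul_sq_le_sq_mul_sq _ _ _
  rw [hq, inv_mul_le_iff₀ (by positivity)]
  have : 0 ≤ ∑ i, (B.mulVec s i) ^ 2 := by positivity
  linarith

/-- Comparison of determinants from comparison of quadratic forms, read off from Gaussian
integrals. -/
lemma det_mono {M N : Matrix V V ℝ} (hM : M.PosDef) (hN : N.PosDef)
    (h : ∀ s : V → ℝ, s ⬝ᵥ (N.mulVec s) ≤ s ⬝ᵥ (M.mulVec s)) :
    1 / √M.det ≤ 1 / √N.det := by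
  have h1 : ∫ s : V → ℝ, Real.exp (-(1 / 2 * (s ⬝ᵥ (M.mulVec s)))) ≤
      ∫ s : V → ℝ, Real.exp (-(1 / 2 * (s ⬝ᵥ (N.mulVec s)))) :=
    integral_mono (gauss hM).1 (gauss hN).1 fun s => by
      refine Real.exp_le_exp.mpr ?_
      have := h s
      linarith
  rw [(gauss hM).2, (gauss hN).2, div_eq_mul_one_div, div_eq_mul_one_div _ (√N.det)] at h1
  exact le_of_mul_le_mul_left h1 (by positivity)

lemma integrable_exp_abs_gauss {a : ℝ} (ha : 0 < a) (K : ℝ) :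
    Integrable (fun t : V → ℝ => Real.exp (K * ∑ i, |t i| - a * ∑ i, t i ^ 2)) := by
  have h1 : Integrable (fun x : ℝ => Real.exp (K * |x| - a * x ^ 2)) := by
    refine ((integrable_exp_neg_mul_sq (half_pos ha)).const_mul
      (Real.exp (K ^ 2 / (2 * a)))).mono' (by fun_prop) (ae_of_all _ fun x => ?_)
    rw [Real.norm_eq_abs, abs_of_pos (Real.exp_pos _), ← Real.exp_add]
    refine Real.exp_le_exp.mpr ?_
    have h2 : K ^ 2 / (2 * a) + -(a / 2) * x ^ 2 - (K * |x| - a * x ^ 2) =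
        (a * |x| - K) ^ 2 / (2 * a) := by
      field_simp
      rw [← sq_abs x]; ring
    have h3 : 0 ≤ (a * |x| - K) ^ 2 / (2 * a) := by positivity
    linarith
  have h2 := Integrable.fintype_prod (ι := V) (f := fun _ (x : ℝ) => Real.exp (K * |x| - a * x ^ 2))
    (fun _ => h1)
  refine h2.congr (ae_of_all _ fun t => ?_)
  simp only [← Real.exp_sum]
  congr 1
  rw [Finset.sum_sub_distrib, Finset.mul_sum, Finset.mul_sum]

/-- Gauge exchange: for a translation invariant `h`, the integral of `h(t) φ(ℓ(t))`, with `ℓ`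
translation covariant, depends on `φ` only through `∫ φ` and not on the choice of `ℓ`. -/
lemma gauge_exchange {h : (V → ℝ) → ENNReal} (hh : Measurable h)
    (hinv : ∀ (t : V → ℝ) (c : ℝ), h (fun i => t i + c) = h t)
    {l m : (V → ℝ) → ℝ} (hl : Measurable l) (hm : Measurable m)
    (hlc : ∀ (t : V → ℝ) (c : ℝ), l (fun i => t i + c) = l t + c)
    (hmc : ∀ (t : V → ℝ) (c : ℝ), m (fun i => t i + c) = m t + c)
    {φ ψ : ℝ → ENNReal} (hφ : Measurable φ) (hψ : Measurable ψ) :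
    (∫⁻ c, ψ c) * ∫⁻ t : V → ℝ, h t * φ (l t) = (∫⁻ c, φ c) * ∫⁻ t : V → ℝ, h t * ψ (m t) := by
  have key : ∀ {l m : (V → ℝ) → ℝ} (_ : Measurable l) (_ : Measurable m)
      {φ ψ : ℝ → ENNReal} (_ : Measurable φ) (_ : Measurable ψ),
      (∫⁻ c, ψ c) * ∫⁻ t : V → ℝ, h t * φ (l t) =
        ∫⁻ c, ∫⁻ t : V → ℝ, h t * φ (l t) * ψ (m t + c) := by
    intro l m hl hm φ ψ hφ hψ
    rw [lintegral_lintegral_swap (by fun_prop), ← lintegral_const_mul _ (by fun_prop)]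
    refine lintegral_congr fun t => ?_
    rw [lintegral_const_mul _ (by fun_prop), lintegral_add_left_eq_self ψ (m t), mul_comm]
  rw [key hl hm hφ hψ, key hm hl hψ hφ]
  -- Translate `t` by `-c`, then reflect `c`.
  rw [← lintegral_neg_eq_self]
  refine lintegral_congr fun c => ?_
  rw [← lintegral_add_right_eq_self _ (fun _ : V => c)]
  refine lintegral_congr fun t => ?_
  have e : t + (fun _ : V => c) = fun i => t i + c := rfl
  rw [e, hinv, hlc, hmc]
  rw [add_neg_cancel_right]
  ring

lemma lintegral_gauss_univ : ∫⁻ q : ℝ, ENNReal.ofReal (Real.exp (-(1 / 2) * q ^ 2)) =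
    ENNReal.ofReal (√(2 * π)) := by
  rw [← ofReal_integral_eq_lintegral_ofReal (integrable_exp_neg_mul_sq (by norm_num))
    (ae_of_all _ fun _ => (Real.exp_pos _).le), integral_gaussian]
  congr 2
  ring

/-- Mass of the limiting zero-mode density, computed by the substitution `q = e^{r/2}`. -/
lemma lintegral_kfun : ∫⁻ r : ℝ, ENNReal.ofReal (Real.exp (r / 2) * Real.exp (-(Real.exp r / 2))) =
    ENNReal.ofReal (√(2 * π)) := by
  have h := lintegral_image_eq_lintegral_abs_deriv_mul (s := Set.univ)
    (f := fun r : ℝ => Real.exp (r / 2)) (f' := fun r => Real.exp (r / 2) * (1 / 2))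
    MeasurableSet.univ
    (fun r _ => by
      exact ((hasDerivAt_id r).div_const 2).exp.hasDerivWithinAt)
    (fun a _ b _ hab => by
      have := Real.exp_injective hab
      linarith)
    (fun q => ENNReal.ofReal (Real.exp (-(1 / 2) * q ^ 2)))
  have him : (fun r : ℝ => Real.exp (r / 2)) '' Set.univ = Set.Ioi 0 := by
    ext q
    simp only [Set.image_univ, Set.mem_range, Set.mem_Ioi]
    constructor
    · rintro ⟨r, rfl⟩; exact Real.exp_pos _
    · intro hq
      exact ⟨2 * Real.log q, by rw [mul_div_cancel_left₀ _ two_ne_zero, Real.exp_log hq]⟩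
  rw [him, ← ofReal_integral_eq_lintegral_ofReal
    (integrable_exp_neg_mul_sq (by norm_num)).integrableOn
    (ae_of_all _ fun _ => (Real.exp_pos _).le), integral_gaussian_Ioi] at h
  have h2 : ∫⁻ r : ℝ, ENNReal.ofReal (Real.exp (r / 2) * Real.exp (-(Real.exp r / 2))) =
      2 * ∫⁻ x : ℝ in Set.univ, ENNReal.ofReal |Real.exp (x / 2) * (1 / 2)| *
        ENNReal.ofReal (Real.exp (-(1 / 2) * Real.exp (x / 2) ^ 2)) := by
    rw [← lintegral_const_mul _ (by fun_prop), setLIntegral_univ]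
    refine lintegral_congr fun r => ?_
    rw [← ENNReal.ofReal_mul (abs_nonneg _), ← ENNReal.ofReal_ofNat, ← ENNReal.ofReal_mul (by norm_num)]
    congr 1
    rw [abs_of_pos (by positivity), ← Real.exp_nat_mul]
    have e1 : ((2 : ℕ) : ℝ) * (r / 2) = r := by push_cast; ring
    rw [e1]
    have e2 : -(1 / 2) * Real.exp r = -(Real.exp r / 2) := by ring
    rw [e2]; ring
  rw [h2, ← h, ← ENNReal.ofReal_ofNat, ← ENNReal.ofReal_mul (by norm_num)]
  congr 1
  have : π / (1 / 2) = 2 * π := by ring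
  rw [this]; ring

/-- The pinned zero-mode density has the same mass for every pinning strength `c`: symmetrize in
`r` and substitute `q = 2 √c sinh (r/2)`. -/
lemma lintegral_psi {c : ℝ} (hc : 0 < c) :
    ∫⁻ r : ℝ, ENNReal.ofReal (√c * Real.exp (r / 2) * Real.exp (-(c * (Real.cosh r - 1)))) =
    ENNReal.ofReal (√(2 * π)) := by
  set I := ∫⁻ r : ℝ, ENNReal.ofReal (√c * Real.exp (r / 2) * Real.exp (-(c * (Real.cosh r - 1))))
    with hI
  have hneg : I = ∫⁻ r : ℝ,
      ENNReal.ofReal (√c * Real.exp (-r / 2) * Real.exp (-(c * (Real.cosh r - 1)))) := by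
    rw [hI, ← lintegral_neg_eq_self]
    simp only [Real.cosh_neg]
  have h := lintegral_image_eq_lintegral_abs_deriv_mul (s := Set.univ)
    (f := fun r : ℝ => 2 * √c * Real.sinh (r / 2))
    (f' := fun r => 2 * √c * (Real.cosh (r / 2) * (1 / 2)))
    MeasurableSet.univ
    (fun r _ => by
      exact ((((hasDerivAt_id r).div_const 2).sinh).const_mul (2 * √c)).hasDerivWithinAt)
    (fun a _ b _ hab => by
      have hc' : 2 * √c ≠ 0 := by positivity
      have := Real.sinh_injective (mul_left_cancel₀ hc' hab)
      linarith)
    (fun q => ENNReal.ofReal (Real.exp (-(1 / 2) * q ^ 2)))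
  have him : (fun r : ℝ => 2 * √c * Real.sinh (r / 2)) '' Set.univ = Set.univ := by
    rw [Set.image_univ, Set.range_eq_univ]
    intro q
    obtain ⟨r, hr⟩ := Real.sinh_surjective (q / (2 * √c))
    refine ⟨2 * r, ?_⟩
    have hc' : 2 * √c ≠ 0 := by positivity
    simp only [mul_div_cancel_left₀ r (two_ne_zero), hr]
    field_simp
  rw [him, setLIntegral_univ, setLIntegral_univ, lintegral_gauss_univ] at h
  have h2 : I + I = 2 * ENNReal.ofReal (√(2 * π)) := by
    conv_lhs => rw [hneg]
    conv_lhs => lhs; rw [← hneg]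
    rw [hI, ← lintegral_add_left (by fun_prop), h, ← lintegral_const_mul _ (by fun_prop)]
    refine lintegral_congr fun r => ?_
    rw [← ENNReal.ofReal_add (by positivity) (by positivity), ← ENNReal.ofReal_mul (abs_nonneg _),
      ← ENNReal.ofReal_ofNat, ← ENNReal.ofReal_mul (by norm_num)]
    congr 1
    have hcosh : 0 < Real.cosh (r / 2) := Real.cosh_pos _
    rw [abs_of_pos (by positivity)]
    have e1 : Real.cosh r - 1 = 2 * Real.sinh (r / 2) ^ 2 := by
      have := Real.cosh_two_mul (r / 2)
      rw [mul_div_cancel₀ r two_ne_zero] at this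
      have h3 := Real.cosh_sq (r / 2)
      linarith
    have e2 : -(c * (Real.cosh r - 1)) = -(1 / 2) * (2 * √c * Real.sinh (r / 2)) ^ 2 := by
      rw [e1, mul_pow, mul_pow, Real.sq_sqrt hc.le]; ring
    rw [e2, Real.cosh_eq (r / 2)]
    have e3 : -r / 2 = -(r / 2) := by ring
    rw [e3]
    ring
  rw [← two_mul] at h2
  exact (ENNReal.mul_right_inj (by norm_num) (by norm_num)).mp h2

end Analysis

/-! ### Energies and the quadratic form of the pinned Laplacian -/

section Energy

variable {V : Type*} [Fintype V] [DecidableEq V]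

lemma aug_adj_some_some (G : SimpleGraph V) (i j : V) :
    (aug G).Adj (some i) (some j) ↔ G.Adj i j := by
  simp only [aug, SimpleGraph.fromRel_adj, ne_eq, Option.some.injEq]
  constructor
  · rintro ⟨_, h | h⟩
    exacts [h, h.symm]
  · intro h
    exact ⟨h.ne, Or.inl h⟩

lemma aug_adj_some_none (G : SimpleGraph V) (i : V) : (aug G).Adj (some i) none := by
  simp [aug, SimpleGraph.fromRel_adj]

lemma aug_adj_none_some (G : SimpleGraph V) (i : V) : (aug G).Adj none (some i) :=
  (aug_adj_some_none G i).symm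

lemma sum_adj_eq_two_mul {α : Type*} [Fintype α] [DecidableEq α] (H : SimpleGraph α)
    (g : Sym2 α → ℝ) :
    ∑ a, ∑ b, (if H.Adj a b then g s(a, b) else 0) =
      2 * ∑ e ∈ Finset.univ.filter (fun e : Sym2 α => e ∈ H.edgeSet), g e := by
  rw [← Finset.sum_product', Finset.univ_product_univ, ← Finset.sum_filter,
    ← Finset.sum_fiberwise_of_maps_to
      (t := Finset.univ.filter (fun e : Sym2 α => e ∈ H.edgeSet))
      (g := fun p : α × α => s(p.1, p.2)), Finset.mul_sum]
  · refine Finset.sum_congr rfl fun e he => ?_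
    induction e using Sym2.ind with
    | _ a b =>
      have hab : H.Adj a b := by simpa using he
      have : (Finset.univ.filter (fun p : α × α => H.Adj p.1 p.2)).filter
          (fun p => s(p.1, p.2) = s(a, b)) = {(a, b), (b, a)} := by
        ext ⟨c, d⟩
        simp only [Finset.mem_filter, Finset.mem_univ, true_and, Sym2.eq_iff, Finset.mem_insert,
          Finset.mem_singleton, Prod.mk.injEq]
        constructor
        · rintro ⟨_, h⟩; exact h
        · rintro (⟨rfl, rfl⟩ | ⟨rfl, rfl⟩)
          · exact ⟨hab, Or.inl ⟨rfl, rfl⟩⟩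
          · exact ⟨hab.symm, Or.inr ⟨rfl, rfl⟩⟩
      rw [this, Finset.sum_pair]
      · simp only [Sym2.eq_swap (a := b) (b := a)]
        ring
      · intro h
        exact hab.ne (Prod.mk.inj h).1
  · rintro ⟨a, b⟩ h
    simpa using h

/-- The interior energy `∑_{i ∼ j} β_ij (cosh (t_i - t_j) - 1)`, written as a sum over ordered
pairs. -/
noncomputable def E0 (G : SimpleGraph V) (β : V → V → ℝ) (t : V → ℝ) : ℝ :=
  1 / 2 * ∑ i, ∑ j, if G.Adj i j then β i j * (Real.cosh (t i - t j) - 1) else 0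

/-- The pinning energy `∑_i p_i (cosh t_i - 1)`. -/
noncomputable def pinE (p t : V → ℝ) : ℝ := ∑ i, p i * (Real.cosh (t i) - 1)

/-- The pinned Laplacian `A(t) + p̂(t)`. -/
noncomputable def Mm (G : SimpleGraph V) (β : V → V → ℝ) (p t : V → ℝ) : Matrix V V ℝ :=
  Amat G β t + epsHat p t

variable {G : SimpleGraph V} {β : V → V → ℝ}

lemma Amat_mulVec (hβ : ∀ i j, β i j = β j i) (t s : V → ℝ) (i : V) :
    (Amat G β t).mulVec s i =
      ∑ j, if G.Adj i j then β i j * Real.exp (t i + t j) * (s i - s j) else 0 := by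
  have h1 : ∀ j, Amat G β t i j = (if i = j then
      ∑ k, (if G.Adj i k then β i k * Real.exp (t i + t k) else 0) else 0) -
      (if G.Adj i j then β i j * Real.exp (t i + t j) else 0) := by
    intro j
    simp only [Amat, Matrix.of_apply]
    by_cases hij : i = j
    · subst hij
      simp only [if_true, SimpleGraph.irrefl, if_false, sub_zero]
      rw [Finset.sum_filter]
      refine Finset.sum_congr rfl fun k _ => ?_
      simp only [G.adj_comm k i, hβ k i, add_comm (t k) (t i)]
    · simp only [hij, if_false, zero_sub]
      split_ifs <;> simp
  simp only [Matrix.mulVec, dotProduct, h1, sub_mul, Finset.sum_sub_distrib]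
  simp only [ite_mul, zero_mul, Finset.sum_ite_eq, Finset.mem_univ, if_true]
  rw [Finset.sum_mul, ← Finset.sum_sub_distrib]
  refine Finset.sum_congr rfl fun j _ => ?_
  split_ifs <;> ring

lemma Mm_mulVec (hβ : ∀ i j, β i j = β j i) (p t s : V → ℝ) (i : V) :
    (Mm G β p t).mulVec s i =
      (∑ j, if G.Adj i j then β i j * Real.exp (t i + t j) * (s i - s j) else 0) +
        p i * Real.exp (t i) * s i := by
  rw [Mm, Matrix.add_mulVec, Pi.add_apply, Amat_mulVec hβ, epsHat, Matrix.mulVec_diagonal]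

lemma Mm_quad (hβ : ∀ i j, β i j = β j i) (p t s : V → ℝ) :
    s ⬝ᵥ ((Mm G β p t).mulVec s) =
      1 / 2 * (∑ i, ∑ j, if G.Adj i j then β i j * Real.exp (t i + t j) * (s i - s j) ^ 2 else 0) +
        ∑ i, p i * Real.exp (t i) * s i ^ 2 := by
  have h1 : s ⬝ᵥ ((Mm G β p t).mulVec s) =
      (∑ i, ∑ j, if G.Adj i j then β i j * Real.exp (t i + t j) * (s i * (s i - s j)) else 0) +
        ∑ i, p i * Real.exp (t i) * s i ^ 2 := by
    simp only [dotProduct, Mm_mulVec hβ, mul_add, Finset.sum_add_distrib, Finset.mul_sum]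
    congr 1
    · refine Finset.sum_congr rfl fun i _ => Finset.sum_congr rfl fun j _ => ?_
      split_ifs <;> ring
    · exact Finset.sum_congr rfl fun i _ => by ring
  have h2 : (∑ i, ∑ j, if G.Adj i j then β i j * Real.exp (t i + t j) * (s i * (s i - s j)) else 0)
      = ∑ i, ∑ j, if G.Adj i j then β i j * Real.exp (t i + t j) * (s j * (s j - s i)) else 0 := by
    rw [Finset.sum_comm]
    refine Finset.sum_congr rfl fun i _ => Finset.sum_congr rfl fun j _ => ?_
    simp only [G.adj_comm j i, hβ j i, add_comm (t j) (t i)]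
  have h3 : (∑ i, ∑ j, if G.Adj i j then β i j * Real.exp (t i + t j) * (s i * (s i - s j)) else 0)
      + (∑ i, ∑ j, if G.Adj i j then β i j * Real.exp (t i + t j) * (s j * (s j - s i)) else 0) =
      ∑ i, ∑ j, if G.Adj i j then β i j * Real.exp (t i + t j) * (s i - s j) ^ 2 else 0 := by
    simp only [← Finset.sum_add_distrib]
    refine Finset.sum_congr rfl fun i _ => Finset.sum_congr rfl fun j _ => ?_
    split_ifs <;> ring
  rw [h1]
  linarith

lemma Mm_isSymm (hβ : ∀ i j, β i j = β j i) (p t : V → ℝ) : (Mm G β p t).IsSymm := by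
  refine Matrix.IsSymm.ext fun i j => ?_
  simp only [Mm, epsHat, Matrix.add_apply, Matrix.diagonal_apply, Amat, Matrix.of_apply]
  by_cases hij : i = j
  · subst hij; rfl
  · simp only [hij, Ne.symm hij, if_false, G.adj_comm j i, hβ j i, add_comm (t j) (t i)]

lemma Mm_posDef (hG : G.Connected) (hβ : ∀ i j, β i j = β j i)
    (hβp : ∀ i j, G.Adj i j → 0 < β i j) {p : V → ℝ} (hp : ∀ i, 0 ≤ p i) {x : V} (hx : 0 < p x)
    (t : V → ℝ) : (Mm G β p t).PosDef := by
  refine Matrix.PosDef.of_dotProduct_mulVec_pos ?_ fun s hs => ?_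
  · rw [Matrix.IsHermitian, Matrix.conjTranspose_eq_transpose_of_trivial]
    exact Mm_isSymm hβ p t
  · rw [star_trivial, Mm_quad hβ]
    have h1 : ∀ i ∈ Finset.univ, 0 ≤ ∑ j, (if G.Adj i j then
        β i j * Real.exp (t i + t j) * (s i - s j) ^ 2 else 0) := fun i _ =>
      Finset.sum_nonneg fun j _ => by
        split_ifs with h
        · have := hβp i j h
          positivity
        · exact le_rfl
    have h1' : ∀ i, ∀ j ∈ Finset.univ, 0 ≤ (if G.Adj i j then
        β i j * Real.exp (t i + t j) * (s i - s j) ^ 2 else 0) := fun i j _ => by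
        split_ifs with h
        · have := hβp i j h
          positivity
        · exact le_rfl
    have h2 : ∀ i ∈ Finset.univ, 0 ≤ p i * Real.exp (t i) * s i ^ 2 := fun i _ => by
      have := hp i
      positivity
    by_contra hcon
    have hA := Finset.sum_nonneg h1
    have hB := Finset.sum_nonneg h2
    have hA0 : ∑ i, ∑ j, (if G.Adj i j then
        β i j * Real.exp (t i + t j) * (s i - s j) ^ 2 else 0) = 0 := by linarith
    have hB0 : ∑ i, p i * Real.exp (t i) * s i ^ 2 = 0 := by linarith
    have hsx : s x = 0 := by
      have := (Finset.sum_eq_zero_iff_of_nonneg h2).mp hB0 x (Finset.mem_univ _)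
      have hne : p x * Real.exp (t x) ≠ 0 := by positivity
      simpa [hne] using this
    have hadj : ∀ i j, G.Adj i j → s i = s j := by
      intro i j hij
      have h3 := (Finset.sum_eq_zero_iff_of_nonneg h1).mp hA0 i (Finset.mem_univ _)
      have h4 := (Finset.sum_eq_zero_iff_of_nonneg (h1' i)).mp h3 j (Finset.mem_univ _)
      rw [if_pos hij] at h4
      have hne : β i j * Real.exp (t i + t j) ≠ 0 := by
        have := hβp i j hij
        positivity
      have h5 := (mul_eq_zero.mp h4).resolve_left hne
      have := pow_eq_zero_iff (two_ne_zero) |>.mp h5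
      linarith
    apply hs
    funext i
    have hr := (SimpleGraph.reachable_iff_reflTransGen x i).mp (hG.preconnected x i)
    induction hr with
    | refl => exact hsx
    | tail _ hbc ih => exact (hadj _ _ hbc) ▸ ih

/-- The Gibbs weight splits into interior energy, pinning energy and a Gaussian in `s`. -/
lemma gibbs_prod (hβ : ∀ i j, β i j = β j i) (p t s : V → ℝ) :
    ∏ e ∈ Finset.univ.filter (fun e : Sym2 (Option V) => e ∈ (aug G).edgeSet), gibbs β p t s e =
      Real.exp (-E0 G β t) * Real.exp (-pinE p t) *
        Real.exp (-(1 / 2 * (s ⬝ᵥ ((Mm G β p t).mulVec s)))) := by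
  set U : Option V → Option V → ℝ := fun a b => bres β p a b * (Bfun t s a b - 1) with hU
  have hUs : ∀ a b, U a b = U b a := by
    intro a b
    have hB : Bfun t s a b = Bfun t s b a := by
      simp only [Bfun]
      rw [← Real.cosh_neg, neg_sub, add_comm (extV t a)]
      ring
    have hb : bres β p a b = bres β p b a := by
      cases a <;> cases b <;> simp [bres, hβ]
    simp only [hU, hB, hb]
  have hg : ∀ a b, gibbs β p t s s(a, b) = Real.exp (-U a b) := by
    intro a b
    change (Real.exp (-U a b) + Real.exp (-U b a)) / 2 = _
    rw [hUs b a]; ring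
  have hE : ∀ a b, esym U s(a, b) = U a b := by
    intro a b
    change (U a b + U b a) / 2 = _
    rw [hUs b a]; ring
  have hge : ∀ e, gibbs β p t s e = Real.exp (-esym U e) := by
    intro e
    induction e using Sym2.ind with
    | _ a b => rw [hg, hE]
  simp only [hge]
  rw [← Real.exp_sum, Finset.sum_neg_distrib, ← Real.exp_add, ← Real.exp_add]
  congr 1
  have h2 := sum_adj_eq_two_mul (aug G) (esym U)
  simp only [hE, Fintype.sum_option, aug_adj_some_some, aug_adj_some_none, aug_adj_none_some,
    SimpleGraph.irrefl, if_true, if_false, zero_add] at h2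
  have hn : ∀ i, U none (some i) = U (some i) none := fun i => hUs _ _
  simp only [hn] at h2
  have hroot : ∀ i, U (some i) none =
      p i * (Real.cosh (t i) - 1) + 1 / 2 * (p i * Real.exp (t i) * s i ^ 2) := by
    intro i
    simp only [hU, bres, Bfun, extV, Option.elim, sub_zero, add_zero]
    ring
  have hInt : ∀ i j, (if G.Adj i j then U (some i) (some j) else 0) =
      (if G.Adj i j then β i j * (Real.cosh (t i - t j) - 1) else 0) +
      1 / 2 * (if G.Adj i j then β i j * Real.exp (t i + t j) * (s i - s j) ^ 2 else 0) := by
    intro i j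
    split_ifs
    · simp only [hU, bres, Bfun, extV, Option.elim]
      ring
    · ring
  simp only [hroot, hInt, Finset.sum_add_distrib, ← Finset.mul_sum] at h2
  rw [Mm_quad hβ, E0, pinE]
  linarith

end Energy

/-! ### Spanning trees of the augmented graph -/

section Trees

variable {V : Type*} [Fintype V] [DecidableEq V] {G : SimpleGraph V}

lemma mem_STrees {α : Type*} [Fintype α] [DecidableEq α] {H : SimpleGraph α}
    {T : Finset (Sym2 α)} : T ∈ STrees H ↔ IsSpanningTree H T := by
  simp [STrees]

lemma edgeSet_of_subset {α : Type*} {H : SimpleGraph α} {T : Finset (Sym2 α)}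
    (h : (T : Set (Sym2 α)) ⊆ H.edgeSet) :
    (SimpleGraph.fromEdgeSet (T : Set (Sym2 α))).edgeSet = T := by
  rw [SimpleGraph.edgeSet_fromEdgeSet]
  ext e
  constructor
  · exact fun he => he.1
  · intro he
    exact ⟨he, fun hd => H.not_isDiag_of_mem_edgeSet (h he) hd⟩

lemma isSpanningTree_iff {α : Type*} [Fintype α] {H : SimpleGraph α} {T : Finset (Sym2 α)}
    (h : (T : Set (Sym2 α)) ⊆ H.edgeSet) :
    IsSpanningTree H T ↔ (SimpleGraph.fromEdgeSet (T : Set (Sym2 α))).Connected ∧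
      T.card + 1 = Fintype.card α := by
  rw [IsSpanningTree, SimpleGraph.isTree_iff_connected_and_card, edgeSet_of_subset h,
    Nat.card_eq_fintype_card (α := α)]
  simp [h]

lemma tree_card {T : Finset (Sym2 (Option V))} (hT : T ∈ STrees (aug G)) :
    T.card = Fintype.card V := by
  have h := mem_STrees.mp hT
  have := ((isSpanningTree_iff h.1).mp h).2
  rw [Fintype.card_option] at this
  omega

lemma rootEdge_injective : Function.Injective (rootEdge : V → Sym2 (Option V)) := by
  intro i j h
  simpa [rootEdge] using h

lemma mem_roots {T : Finset (Sym2 (Option V))} {i : V} : i ∈ roots T ↔ rootEdge i ∈ T := by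
  simp [roots]

lemma mem_forestOf {T : Finset (Sym2 (Option V))} {e : Sym2 (Option V)} :
    e ∈ forestOf T ↔ e ∈ T ∧ (none : Option V) ∉ e := by
  simp [forestOf]

lemma none_not_mem_rootEdge (i : V) : ¬ (none : Option V) ∉ rootEdge i := by
  simp [rootEdge]

/-- An edge of the augmented graph at `ρ` is a root edge. -/
lemma eq_rootEdge {e : Sym2 (Option V)} (he : e ∈ (aug G).edgeSet) (hn : (none : Option V) ∈ e) :
    ∃ i, e = rootEdge i := by
  induction e using Sym2.ind with
  | _ a b =>
    rcases a with _ | i <;> rcases b with _ | j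
    · simp at he
    · exact ⟨j, Sym2.eq_swap⟩
    · exact ⟨i, rfl⟩
    · simp at hn

lemma tree_eq_union {T : Finset (Sym2 (Option V))} (hT : T ∈ STrees (aug G)) :
    T = forestOf T ∪ (roots T).image rootEdge := by
  ext e
  simp only [Finset.mem_union, mem_forestOf, Finset.mem_image, mem_roots]
  constructor
  · intro he
    by_cases hn : (none : Option V) ∈ e
    · obtain ⟨i, rfl⟩ := eq_rootEdge ((mem_STrees.mp hT).1 he) hn
      exact Or.inr ⟨i, he, rfl⟩
    · exact Or.inl ⟨he, hn⟩
  · rintro (h | ⟨i, hi, rfl⟩)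
    exacts [h.1, hi]

lemma tree_disjoint (T : Finset (Sym2 (Option V))) :
    Disjoint (forestOf T) ((roots T).image rootEdge) := by
  rw [Finset.disjoint_left]
  rintro e he hr
  obtain ⟨i, -, rfl⟩ := Finset.mem_image.mp hr
  exact none_not_mem_rootEdge i (mem_forestOf.mp he).2

lemma roots_nonempty [Nonempty V] {T : Finset (Sym2 (Option V))} (hT : T ∈ STrees (aug G)) :
    (roots T).Nonempty := by
  have h := mem_STrees.mp hT
  obtain ⟨u, hu⟩ := h.2.connected.preconnected.exists_adj_of_nontrivial (none : Option V)
  rw [SimpleGraph.fromEdgeSet_adj] at hu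
  obtain ⟨i, hi⟩ := eq_rootEdge (h.1 hu.1) (by simp)
  exact ⟨i, mem_roots.mpr (hi ▸ hu.1)⟩

/-- If `ρ` is a leaf of the spanning tree, deleting it leaves all other vertices connected. -/
lemma forest_reachable {T : Finset (Sym2 (Option V))} (hT : T ∈ STrees (aug G)) {i : V}
    (hi : roots T = {i}) (a b : V) : connIn T a b := by
  have h := mem_STrees.mp hT
  have key : ∀ u v : Option V, Relation.ReflTransGen
      (SimpleGraph.fromEdgeSet (T : Set (Sym2 (Option V)))).Adj u v →
      (SimpleGraph.fromEdgeSet (↑(forestOf T) : Set (Sym2 (Option V)))).Reachable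
        (some (u.getD i)) (some (v.getD i)) := by
    intro u v huv
    induction huv with
    | refl => exact SimpleGraph.Reachable.refl _
    | @tail v w _ hvw ih =>
      refine ih.trans ?_
      rw [SimpleGraph.fromEdgeSet_adj] at hvw
      have hroot : ∀ k : V, rootEdge k ∈ T → k = i := fun k hk => by
        have := mem_roots.mpr hk
        rwa [hi, Finset.mem_singleton] at this
      rcases v with _ | v <;> rcases w with _ | w
      · exact absurd rfl hvw.2
      · have : w = i := hroot w (by
          have := hvw.1
          rw [Sym2.eq_swap] at this
          exact this)
        subst this
        exact SimpleGraph.Reachable.refl _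
      · have : v = i := hroot v hvw.1
        subst this
        exact SimpleGraph.Reachable.refl _
      · refine SimpleGraph.Adj.reachable ?_
        rw [SimpleGraph.fromEdgeSet_adj]
        refine ⟨?_, hvw.2⟩
        exact mem_forestOf.mpr ⟨hvw.1, by simp⟩
  exact key (some a) (some b) ((SimpleGraph.reachable_iff_reflTransGen _ _).mp
    (h.2.connected.preconnected _ _))

lemma forestOf_insert (T : Finset (Sym2 (Option V))) (j : V) :
    forestOf (insert (rootEdge j) (forestOf T)) = forestOf T := by
  ext e
  simp only [mem_forestOf, Finset.mem_insert]
  constructor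
  · rintro ⟨rfl | h, hn⟩
    · exact absurd hn (none_not_mem_rootEdge j)
    · exact h
  · exact fun h => ⟨Or.inr h, h.2⟩

lemma roots_insert (T : Finset (Sym2 (Option V))) (j : V) :
    roots (insert (rootEdge j) (forestOf T)) = {j} := by
  ext k
  simp only [mem_roots, Finset.mem_insert, mem_forestOf, Finset.mem_singleton]
  constructor
  · rintro (h | h)
    · exact rootEdge_injective h
    · exact absurd h.2 (none_not_mem_rootEdge k)
  · rintro rfl
    exact Or.inl rfl

lemma tree_eq_insert {T : Finset (Sym2 (Option V))} (hT : T ∈ STrees (aug G)) {i : V}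
    (hi : roots T = {i}) : insert (rootEdge i) (forestOf T) = T := by
  conv_rhs => rw [tree_eq_union hT, hi]
  rw [Finset.image_singleton, Finset.union_comm]
  rfl

/-- Moving the single root edge of a spanning tree produces a spanning tree. -/
lemma swap_root {T : Finset (Sym2 (Option V))} (hT : T ∈ STrees (aug G)) {i : V}
    (hi : roots T = {i}) (j : V) : insert (rootEdge j) (forestOf T) ∈ STrees (aug G) := by
  have h := mem_STrees.mp hT
  have hsub : ((insert (rootEdge j) (forestOf T) : Finset (Sym2 (Option V))) :
      Set (Sym2 (Option V))) ⊆ (aug G).edgeSet := by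
    intro e he
    rw [Finset.mem_coe, Finset.mem_insert] at he
    rcases he with rfl | he
    · exact aug_adj_some_none G j
    · exact h.1 (mem_forestOf.mp he).1
  rw [mem_STrees, isSpanningTree_iff hsub]
  constructor
  · have hle : SimpleGraph.fromEdgeSet (↑(forestOf T) : Set (Sym2 (Option V))) ≤
        SimpleGraph.fromEdgeSet
          ((insert (rootEdge j) (forestOf T) : Finset (Sym2 (Option V))) :
            Set (Sym2 (Option V))) :=
      SimpleGraph.fromEdgeSet_mono (by
        rw [Finset.coe_insert]
        exact Set.subset_insert _ _)
    have hj : (SimpleGraph.fromEdgeSet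
          ((insert (rootEdge j) (forestOf T) : Finset (Sym2 (Option V))) :
            Set (Sym2 (Option V)))).Adj (some j) none := by
      rw [SimpleGraph.fromEdgeSet_adj]
      exact ⟨Finset.mem_insert_self _ _, by simp⟩
    rw [SimpleGraph.connected_iff_exists_forall_reachable]
    refine ⟨some j, fun v => ?_⟩
    rcases v with _ | v
    · exact hj.reachable
    · exact SimpleGraph.Reachable.mono hle (forest_reachable hT hi j v)
  · have hc := ((isSpanningTree_iff h.1).mp h).2
    rw [← tree_eq_insert hT hi] at hc
    rw [← hc, Finset.card_insert_of_notMem, Finset.card_insert_of_notMem]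
    · exact fun hm => none_not_mem_rootEdge i (mem_forestOf.mp hm).2
    · exact fun hm => none_not_mem_rootEdge j (mem_forestOf.mp hm).2

/-- For connected `Γ` there is a spanning tree of the augmented graph whose only root is `x`. -/
lemma exists_tree_root (hG : G.Connected) (x : V) :
    ∃ T ∈ STrees (aug G), roots T = {x} := by
  haveI : Nonempty V := ⟨x⟩
  set S : Set (Sym2 (Option V)) := insert (rootEdge x) (Sym2.map some '' G.edgeSet) with hS
  have hSaug : S ⊆ (aug G).edgeSet := by
    rintro e (rfl | ⟨f, hf, rfl⟩)
    · exact aug_adj_some_none G x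
    · induction f using Sym2.ind with
      | _ a b =>
        rw [Sym2.map_mk]
        exact (aug_adj_some_some G a b).mpr hf
  have hconn : (SimpleGraph.fromEdgeSet S).Connected := by
    rw [SimpleGraph.connected_iff_exists_forall_reachable]
    refine ⟨some x, fun v => ?_⟩
    rcases v with _ | v
    · refine SimpleGraph.Adj.reachable ?_
      rw [SimpleGraph.fromEdgeSet_adj]
      exact ⟨Set.mem_insert _ _, by simp⟩
    · have hr := (SimpleGraph.reachable_iff_reflTransGen x v).mp (hG.preconnected x v)
      induction hr with
      | refl => exact SimpleGraph.Reachable.refl _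
      | @tail b c _ hbc ih =>
        refine ih.trans (SimpleGraph.Adj.reachable ?_)
        rw [SimpleGraph.fromEdgeSet_adj]
        refine ⟨Set.mem_insert_of_mem _ ⟨s(b, c), hbc, ?_⟩, by simpa using hbc.ne⟩
        rw [Sym2.map_mk]
  obtain ⟨H, hle, hH⟩ := hconn.exists_isTree_le
  have hHS : H.edgeSet ⊆ S := by
    intro e he
    have := SimpleGraph.edgeSet_mono hle he
    rw [SimpleGraph.edgeSet_fromEdgeSet] at this
    exact this.1
  set T : Finset (Sym2 (Option V)) := Finset.univ.filter (fun e => e ∈ H.edgeSet) with hTdef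
  have hTc : (T : Set (Sym2 (Option V))) = H.edgeSet := by
    ext e; simp [hTdef]
  have hT : T ∈ STrees (aug G) := by
    rw [mem_STrees, IsSpanningTree, hTc, SimpleGraph.fromEdgeSet_edgeSet]
    exact ⟨hHS.trans hSaug, hH⟩
  refine ⟨T, hT, ?_⟩
  have hsub : roots T ⊆ {x} := by
    intro i hi
    have h1 : rootEdge i ∈ H.edgeSet := by
      rw [← hTc]; exact mem_roots.mp hi
    rcases hHS h1 with h2 | ⟨f, _, h2⟩
    · exact Finset.mem_singleton.mpr (rootEdge_injective h2)
    · exfalso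
      have h3 : (none : Option V) ∈ Sym2.map some f := by
        rw [h2]; simp [rootEdge]
      rw [Sym2.mem_map] at h3
      obtain ⟨_, _, h4⟩ := h3
      simp at h4
  exact (Finset.subset_singleton_iff.mp hsub).resolve_left (roots_nonempty hT).ne_empty

variable {β : V → V → ℝ}

lemma treeW_root (p t : V → ℝ) (i : V) : treeW β p t (rootEdge i) = p i * Real.exp (t i) := by
  change (bres β p (some i) none * Real.exp (extV t (some i) + extV t none) +
    bres β p none (some i) * Real.exp (extV t none + extV t (some i))) / 2 = _
  simp only [bres, extV, Option.elim, add_zero, zero_add]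
  ring

lemma treeW_some (p t : V → ℝ) (i j : V) :
    treeW β p t s(some i, some j) = (β i j + β j i) / 2 * Real.exp (t i + t j) := by
  change (bres β p (some i) (some j) * Real.exp (extV t (some i) + extV t (some j)) +
    bres β p (some j) (some i) * Real.exp (extV t (some j) + extV t (some i))) / 2 = _
  simp only [bres, extV, Option.elim, add_comm (t j)]
  ring

lemma treeW_none (p t : V → ℝ) : treeW β p t s(none, none) = 0 := by
  change (bres β p none none * Real.exp (extV t none + extV t none) +
    bres β p none none * Real.exp (extV t none + extV t none)) / 2 = _
  simp [bres]

lemma treeW_shift (p t : V → ℝ) (c : ℝ) (e : Sym2 (Option V)) :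
    treeW β p (fun i => t i + c) e =
      Real.exp (2 * c) * treeW β (fun i => p i * Real.exp (-c)) t e := by
  have hr : ∀ i, treeW β p (fun i => t i + c) (rootEdge i) =
      Real.exp (2 * c) * treeW β (fun i => p i * Real.exp (-c)) t (rootEdge i) := by
    intro i
    have : Real.exp (2 * c) * Real.exp (-c) = Real.exp c := by
      rw [← Real.exp_add]; congr 1; ring
    rw [treeW_root, treeW_root, Real.exp_add, ← this]
    ring
  induction e using Sym2.ind with
  | _ a b =>
    rcases a with _ | i <;> rcases b with _ | j
    · simp [treeW_none]
    · rw [Sym2.eq_swap]; exact hr j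
    · exact hr i
    · rw [treeW_some, treeW_some]
      have : t i + c + (t j + c) = 2 * c + (t i + t j) := by ring
      rw [this, Real.exp_add]
      ring

/-- Weight of the forest `T ∩ E`; it does not involve the pinning. -/
noncomputable def forestW (β : V → V → ℝ) (t : V → ℝ) (T : Finset (Sym2 (Option V))) : ℝ :=
  ∏ e ∈ forestOf T, treeW β 0 t e

/-- Weight of the spanning tree `T` of the augmented graph. -/
noncomputable def wT (β : V → V → ℝ) (p t : V → ℝ) (T : Finset (Sym2 (Option V))) : ℝ :=
  ∏ e ∈ T, treeW β p t e

lemma wT_split {T : Finset (Sym2 (Option V))} (hT : T ∈ STrees (aug G)) (p t : V → ℝ) :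
    wT β p t T = forestW β t T * ∏ i ∈ roots T, p i * Real.exp (t i) := by
  rw [wT]
  conv_lhs => rw [tree_eq_union hT]
  rw [Finset.prod_union (tree_disjoint T), Finset.prod_image fun a _ b _ h => rootEdge_injective h]
  congr 1
  · refine Finset.prod_congr rfl fun e he => ?_
    have hn := (mem_forestOf.mp he).2
    induction e using Sym2.ind with
    | _ a b =>
      rcases a with _ | i <;> rcases b with _ | j
      · simp at hn
      · simp at hn
      · simp at hn
      · rw [treeW_some, treeW_some]
  · exact Finset.prod_congr rfl fun i _ => treeW_root p t i

lemma wT_shift {T : Finset (Sym2 (Option V))} (hT : T ∈ STrees (aug G)) (p t : V → ℝ) (c : ℝ) :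
    wT β p (fun i => t i + c) T =
      Real.exp (2 * c) ^ Fintype.card V * wT β (fun i => p i * Real.exp (-c)) t T := by
  simp only [wT, treeW_shift p t c, Finset.prod_mul_distrib, Finset.prod_const, tree_card hT]

lemma forest_edge {T : Finset (Sym2 (Option V))} (hT : T ∈ STrees (aug G))
    {e : Sym2 (Option V)} (he : e ∈ forestOf T) :
    ∃ i j, G.Adj i j ∧ e = s(some i, some j) := by
  have h := mem_forestOf.mp he
  have h1 := (mem_STrees.mp hT).1 h.1
  have hn := h.2
  induction e using Sym2.ind with
  | _ a b =>
    rcases a with _ | i <;> rcases b with _ | j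
    · simp at hn
    · simp at hn
    · simp at hn
    · exact ⟨i, j, (aug_adj_some_some G i j).mp h1, rfl⟩

lemma forestW_pos (hβp : ∀ i j, G.Adj i j → 0 < β i j) {T : Finset (Sym2 (Option V))}
    (hT : T ∈ STrees (aug G)) (t : V → ℝ) : 0 < forestW β t T := by
  refine Finset.prod_pos fun e he => ?_
  obtain ⟨i, j, hij, rfl⟩ := forest_edge hT he
  rw [treeW_some]
  have h1 := hβp i j hij
  have h2 := hβp j i hij.symm
  positivity

lemma abs_le_sum_abs (t : V → ℝ) (i : V) : |t i| ≤ ∑ k, |t k| :=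
  Finset.single_le_sum (f := fun k => |t k|) (fun k _ => abs_nonneg _) (Finset.mem_univ i)

lemma forestW_le (hβp : ∀ i j, G.Adj i j → 0 < β i j) {T : Finset (Sym2 (Option V))}
    (hT : T ∈ STrees (aug G)) (t : V → ℝ) :
    forestW β t T ≤ forestW β 0 T * Real.exp (2 * Fintype.card V * ∑ k, |t k|) := by
  have h1 : forestW β t T ≤
      ∏ e ∈ forestOf T, (treeW β 0 0 e * Real.exp (2 * ∑ k, |t k|)) := by
    refine Finset.prod_le_prod (fun e he => ?_) (fun e he => ?_)
    · obtain ⟨i, j, hij, rfl⟩ := forest_edge hT he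
      have h1 := hβp i j hij
      have h2 := hβp j i hij.symm
      rw [treeW_some]
      positivity
    · obtain ⟨i, j, hij, rfl⟩ := forest_edge hT he
      have h1 := hβp i j hij
      have h2 := hβp j i hij.symm
      rw [treeW_some, treeW_some]
      simp only [Pi.zero_apply, add_zero, Real.exp_zero, mul_one]
      refine mul_le_mul_of_nonneg_left (Real.exp_le_exp.mpr ?_) (by positivity)
      have h3 := (le_abs_self (t i)).trans (abs_le_sum_abs t i)
      have h4 := (le_abs_self (t j)).trans (abs_le_sum_abs t j)
      linarith
  refine h1.trans ?_
  rw [Finset.prod_mul_distrib, Finset.prod_const, ← Real.exp_nat_mul]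
  refine mul_le_mul_of_nonneg_left (Real.exp_le_exp.mpr ?_) (forestW_pos hβp hT 0).le
  have hc : (forestOf T).card ≤ Fintype.card V := by
    rw [← tree_card hT]
    exact Finset.card_le_card (Finset.filter_subset _ _)
  have hc' : ((forestOf T).card : ℝ) ≤ Fintype.card V := by exact_mod_cast hc
  have h0 : 0 ≤ ∑ k, |t k| := Finset.sum_nonneg fun k _ => abs_nonneg _
  nlinarith

/-- Total forest weight of the spanning trees whose only root is `i`. -/
noncomputable def treeSum (G : SimpleGraph V) (β : V → V → ℝ) (t : V → ℝ) (i : V) : ℝ :=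
  ∑ T ∈ (STrees (aug G)).filter (fun T => roots T = {i}), forestW β t T

/-- Spanning trees with the single root `i` are, after removal of the root edge, the spanning
trees of `Γ`, whatever `i` is. -/
lemma treeSum_eq (t : V → ℝ) (i j : V) : treeSum G β t i = treeSum G β t j := by
  refine Finset.sum_nbij' (fun T => insert (rootEdge j) (forestOf T))
    (fun T => insert (rootEdge i) (forestOf T)) ?_ ?_ ?_ ?_ ?_
  · intro T hT
    rw [Finset.mem_filter] at hT ⊢
    exact ⟨swap_root hT.1 hT.2 j, roots_insert T j⟩
  · intro T hT
    rw [Finset.mem_filter] at hT ⊢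
    exact ⟨swap_root hT.1 hT.2 i, roots_insert T i⟩
  · intro T hT
    rw [Finset.mem_filter] at hT
    simp only [forestOf_insert]
    exact tree_eq_insert hT.1 hT.2
  · intro T hT
    rw [Finset.mem_filter] at hT
    simp only [forestOf_insert]
    exact tree_eq_insert hT.1 hT.2
  · intro T _
    simp only [forestW, forestOf_insert]

lemma treeSum_pos (hG : G.Connected) (hβp : ∀ i j, G.Adj i j → 0 < β i j) (t : V → ℝ) (x : V) :
    0 < treeSum G β t x := by
  obtain ⟨T, hT, hr⟩ := exists_tree_root hG x
  exact Finset.sum_pos (fun T hT => forestW_pos hβp (Finset.mem_filter.mp hT).1 t)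
    ⟨T, Finset.mem_filter.mpr ⟨hT, hr⟩⟩

/-- The total weight of single-root trees factorizes, since `treeSum` is independent of the root. -/
lemma sum_single_root (p t : V → ℝ) (x : V) :
    ∑ T ∈ (STrees (aug G)).filter (fun T => (roots T).card = 1), wT β p t T =
      (∑ i, p i * Real.exp (t i)) * treeSum G β t x := by
  have h1 : (STrees (aug G)).filter (fun T => (roots T).card = 1) =
      Finset.univ.biUnion (fun i : V => (STrees (aug G)).filter (fun T => roots T = {i})) := by
    ext T
    simp only [Finset.mem_filter, Finset.mem_biUnion, Finset.mem_univ, true_and,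
      Finset.card_eq_one]
    constructor
    · rintro ⟨h, i, hi⟩; exact ⟨i, h, hi⟩
    · rintro ⟨i, h, hi⟩; exact ⟨h, i, hi⟩
  rw [h1, Finset.sum_biUnion, Finset.sum_mul]
  · refine Finset.sum_congr rfl fun i _ => ?_
    rw [treeSum_eq t x i, treeSum, Finset.mul_sum]
    refine Finset.sum_congr rfl fun T hT => ?_
    rw [Finset.mem_filter] at hT
    rw [wT_split hT.1, hT.2, Finset.prod_singleton, mul_comm]
  · intro i _ j _ hij
    rw [Function.onFun, Finset.disjoint_left]
    intro T h1 h2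
    rw [Finset.mem_filter] at h1 h2
    exact hij (Finset.singleton_injective (h1.2.symm.trans h2.2))

end Trees

/-! ### Determinants, cofactors and Green's functions -/

section LinAlg

variable {V : Type*} [Fintype V] [DecidableEq V] {G : SimpleGraph V} {β : V → V → ℝ}

lemma continuous_Amat : Continuous (Amat G β) := by
  refine continuous_pi fun i => continuous_pi fun j => ?_
  simp only [Amat, Matrix.of_apply]
  split_ifs <;> fun_prop

lemma continuous_Mm : Continuous fun z : (V → ℝ) × (V → ℝ) => Mm G β z.1 z.2 := by
  unfold Mm epsHat
  have := (continuous_Amat (G := G) (β := β)).comp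
    (continuous_snd (X := V → ℝ) (Y := V → ℝ))
  refine Continuous.add this ?_
  exact Continuous.matrix_diagonal (by fun_prop)

lemma Mm_zero (t : V → ℝ) : Mm G β 0 t = Amat G β t := by
  ext i j; simp [Mm, epsHat]

lemma Mm_mulVec_one (hβ : ∀ i j, β i j = β j i) (p t : V → ℝ) :
    (Mm G β p t).mulVec (fun _ => 1) = fun i => p i * Real.exp (t i) := by
  ext i; rw [Mm_mulVec hβ]; simp

/-- Cramer's rule applied to `M 1 = (p_i e^{t_i})_i`. -/
lemma Mm_det_eq (hβ : ∀ i j, β i j = β j i) (p t : V → ℝ) (k : V) :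
    (Mm G β p t).det = ∑ i, (Mm G β p t).adjugate k i * (p i * Real.exp (t i)) := by
  have h := congrArg (fun w => (Mm G β p t).adjugate.mulVec w k) (Mm_mulVec_one (G := G) hβ p t)
  simp only [Matrix.mulVec_mulVec, Matrix.adjugate_mul, Matrix.smul_mulVec,
    Matrix.one_mulVec] at h
  simpa [Matrix.mulVec, dotProduct] using h

lemma smul_pin_tendsto (p : V → ℝ) :
    Tendsto (fun v : ℝ => v • p) (𝓝[>] 0) (𝓝 0) := by
  have : Tendsto (fun v : ℝ => v • p) (𝓝 0) (𝓝 ((0:ℝ) • p)) :=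
    (continuous_id.smul continuous_const).tendsto 0
  rw [zero_smul] at this
  exact this.mono_left nhdsWithin_le_nhds

lemma adj_tendsto (p t : V → ℝ) (i j : V) :
    Tendsto (fun v : ℝ => (Mm G β (v • p) t).adjugate i j) (𝓝[>] 0)
      (𝓝 ((Amat G β t).adjugate i j)) := by
  have hc : Continuous fun q : V → ℝ => (Mm G β q t).adjugate i j := by
    have : Continuous fun q : V → ℝ => Mm G β q t :=
      continuous_Mm.comp (continuous_id.prodMk continuous_const)
    exact this.matrix_adjugate.matrix_elem i j
  have := (hc.tendsto 0).comp (smul_pin_tendsto p)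
  rwa [Mm_zero] at this

/-- The cofactors of the Laplacian are all equal, since constants span its kernel. -/
lemma adj_const (hβ : ∀ i j, β i j = β j i) (t : V → ℝ) (i j k l : V) :
    (Amat G β t).adjugate i j = (Amat G β t).adjugate k l := by
  have h1 : ∀ a b c : V, (Amat G β t).adjugate a c = (Amat G β t).adjugate b c := by
    intro a b c
    refine tendsto_nhds_unique_of_eventuallyEq (adj_tendsto (singlePin c 1) t a c)
      (adj_tendsto (singlePin c 1) t b c) ?_
    filter_upwards [self_mem_nhdsWithin] with v hv
    have hv : 0 < v := hv
    have ha := Mm_det_eq (G := G) hβ (v • singlePin c 1) t a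
    rw [Mm_det_eq hβ _ t b] at ha
    simp only [Pi.smul_apply, singlePin, smul_eq_mul, mul_ite, mul_one, mul_zero, ite_mul,
      zero_mul, Finset.sum_ite_eq', Finset.mem_univ, if_true] at ha
    exact (mul_right_cancel₀ (by positivity) ha).symm
  have hs : (Amat G β t).IsSymm := by
    rw [← Mm_zero]; exact Mm_isSymm hβ 0 t
  have h2 : ∀ a b : V, (Amat G β t).adjugate a b = (Amat G β t).adjugate b a := by
    intro a b
    have := congrFun (congrFun (Matrix.adjugate_transpose (Amat G β t)) b) a
    rw [hs.eq] at this
    simpa using this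
  rw [h1 i l j, h2 l j, h1 j k l]

lemma det_single (hβ : ∀ i j, β i j = β j i) (x : V) (c : ℝ) (t : V → ℝ) :
    (Mm G β (singlePin x c) t).det = c * Real.exp (t x) * (Amat G β t).adjugate x x := by
  have h : (Mm G β (singlePin x c) t).adjugate x x = (Amat G β t).adjugate x x := by
    rw [Matrix.adjugate_apply, Matrix.adjugate_apply]
    congr 1
    ext a b
    by_cases hax : a = x
    · subst hax; simp
    · simp [Mm, epsHat, Matrix.diagonal_apply, singlePin, hax]
  rw [Mm_det_eq hβ _ t x]
  simp only [singlePin, ite_mul, zero_mul, mul_ite, mul_zero, Finset.sum_ite_eq',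
    Finset.mem_univ, if_true]
  exact (congrArg (· * (c * Real.exp (t x))) h).trans (by ring)

lemma singlePin_nonneg (x : V) {c : ℝ} (hc : 0 ≤ c) (i : V) : 0 ≤ singlePin x c i := by
  unfold singlePin; split_ifs <;> simp [hc]

lemma singlePin_pos (x : V) {c : ℝ} (hc : 0 < c) : 0 < singlePin x c x := by
  simp [singlePin, hc]

lemma tau_pos (hG : G.Connected) (hβ : ∀ i j, β i j = β j i)
    (hβp : ∀ i j, G.Adj i j → 0 < β i j) (t : V → ℝ) (x : V) :
    0 < (Amat G β t).adjugate x x := by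
  have h := (Mm_posDef hG hβ hβp (singlePin_nonneg x zero_le_one)
    (singlePin_pos x one_pos) t).det_pos
  rw [det_single hβ] at h
  have := Real.exp_pos (t x)
  exact pos_of_mul_pos_right h (by positivity)

lemma sum_exp_pos {p : V → ℝ} (hp : ∀ i, 0 ≤ p i) {x : V} (hx : 0 < p x) (t : V → ℝ) :
    0 < ∑ i, p i * Real.exp (t i) :=
  Finset.sum_pos' (fun i _ => mul_nonneg (hp i) (Real.exp_pos _).le)
    ⟨x, Finset.mem_univ _, mul_pos hx (Real.exp_pos _)⟩

lemma det_div_eq (hβ : ∀ i j, β i j = β j i) (p t : V → ℝ) (k : V) (v : ℝ) :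
    (Mm G β (v • p) t).det
      = v * ∑ i, (Mm G β (v • p) t).adjugate k i * (p i * Real.exp (t i)) := by
  rw [Mm_det_eq hβ _ t k, Finset.mul_sum]
  exact Finset.sum_congr rfl fun i _ => by simp; ring

lemma cofactor_sum_tendsto (hβ : ∀ i j, β i j = β j i) (p t : V → ℝ) (k : V) :
    Tendsto (fun v : ℝ => ∑ i, (Mm G β (v • p) t).adjugate k i * (p i * Real.exp (t i)))
      (𝓝[>] 0) (𝓝 ((∑ i, p i * Real.exp (t i)) * (Amat G β t).adjugate k k)) := by
  have := tendsto_finsetSum (Finset.univ) fun (i : V) _ =>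
    (adj_tendsto (G := G) (β := β) p t k i).mul_const (p i * Real.exp (t i))
  convert this using 2
  rw [Finset.sum_mul]
  exact Finset.sum_congr rfl fun i _ => by rw [adj_const hβ t k i k k]; ring

lemma det_div_tendsto (hβ : ∀ i j, β i j = β j i) (p t : V → ℝ) (k : V) :
    Tendsto (fun v : ℝ => (Mm G β (v • p) t).det / v)
      (𝓝[>] 0) (𝓝 ((∑ i, p i * Real.exp (t i)) * (Amat G β t).adjugate k k)) := by
  refine (cofactor_sum_tendsto hβ p t k).congr' ?_
  filter_upwards [self_mem_nhdsWithin] with v hv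
  rw [det_div_eq hβ p t k, mul_div_cancel_left₀ _ (ne_of_gt hv)]

/-- As the pinning is switched off, the Green's function diverges like the inverse of the total
pinning, uniformly in its arguments. -/
lemma inv_tendsto (hG : G.Connected) (hβ : ∀ i j, β i j = β j i)
    (hβp : ∀ i j, G.Adj i j → 0 < β i j) {p : V → ℝ} (hp : ∀ i, 0 ≤ p i) {z : V}
    (hz : 0 < p z) (t : V → ℝ) (x y : V) :
    Tendsto (fun v : ℝ => v * (Mm G β (v • p) t)⁻¹ x y)
      (𝓝[>] 0) (𝓝 ((∑ i, p i * Real.exp (t i))⁻¹)) := by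
  have hS := sum_exp_pos hp hz t
  have hτ := tau_pos hG hβ hβp t x
  have h := (adj_tendsto (G := G) (β := β) p t x y).div (cofactor_sum_tendsto hβ p t x)
    (mul_pos hS hτ).ne'
  rw [adj_const hβ t x y x x] at h
  have e : (Amat G β t).adjugate x x / ((∑ i, p i * Real.exp (t i)) * (Amat G β t).adjugate x x)
      = (∑ i, p i * Real.exp (t i))⁻¹ := by field_simp
  rw [e] at h
  refine h.congr' ?_
  filter_upwards [self_mem_nhdsWithin] with v hv
  have hv : 0 < v := hv
  rw [Matrix.inv_def, Matrix.smul_apply, det_div_eq hβ p t x, Ring.inverse_eq_inv', smul_eq_mul,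
    mul_inv, Pi.div_apply]
  field_simp

/-- Pointwise bound on the Green's function, from its variational characterisation. -/
lemma inv_bound (hG : G.Connected) (hβ : ∀ i j, β i j = β j i)
    (hβp : ∀ i j, G.Adj i j → 0 < β i j) {p : V → ℝ} (hp : ∀ i, 0 ≤ p i) {x y : V}
    (hy : 0 < p y) (t : V → ℝ) :
    (p x * Real.exp (t x)) * (p y * Real.exp (t y)) * ((Mm G β p t)⁻¹ x y) ^ 2 ≤ 1 := by
  have hM := Mm_posDef hG hβ hβp hp hy t
  set M := Mm G β p t with hMdef
  set g : V → ℝ := fun i => M⁻¹ i y with hg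
  have hMg : M.mulVec g = Pi.single y 1 := by
    have : M * M⁻¹ = 1 := Matrix.mul_nonsing_inv _ (isUnit_iff_ne_zero.mpr hM.det_pos.ne')
    ext i
    have := congrFun (congrFun this i) y
    rw [Matrix.mul_apply, Matrix.one_apply] at this
    simpa [Matrix.mulVec, dotProduct, Pi.single_apply, hg] using this
  have hq : g ⬝ᵥ M.mulVec g = g y := by rw [hMg]; simp
  rw [hMdef, Mm_quad hβ] at hq
  have h1 : 0 ≤ ∑ i, ∑ j, if G.Adj i j then
      β i j * Real.exp (t i + t j) * (g i - g j) ^ 2 else 0 := by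
    refine Finset.sum_nonneg fun i _ => Finset.sum_nonneg fun j _ => ?_
    split_ifs with hij
    · have := hβp i j hij; positivity
    · exact le_rfl
  have h2 : ∀ i, p i * Real.exp (t i) * g i ^ 2 ≤ g y := fun i => by
    have := Finset.single_le_sum (f := fun i => p i * Real.exp (t i) * g i ^ 2)
      (fun j _ => mul_nonneg (mul_nonneg (hp j) (Real.exp_pos _).le) (sq_nonneg _))
      (Finset.mem_univ i)
    linarith
  have hxx := h2 x
  have hyy := h2 y
  have hpy : 0 < p y * Real.exp (t y) := by positivity
  change (p x * Real.exp (t x)) * (p y * Real.exp (t y)) * (g x) ^ 2 ≤ 1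
  have hgy0 : 0 ≤ g y := le_trans (by positivity) hyy
  have hgy : p y * Real.exp (t y) * g y ≤ 1 := by
    rcases hgy0.eq_or_lt with h | h
    · rw [← h]; simp
    · refine le_of_mul_le_mul_right ?_ h
      linarith [show p y * Real.exp (t y) * g y * g y = p y * Real.exp (t y) * g y ^ 2 by ring]
  calc _ = p y * Real.exp (t y) * (p x * Real.exp (t x) * g x ^ 2) := by ring
    _ ≤ p y * Real.exp (t y) * g y := by gcongr
    _ ≤ 1 := hgy

lemma Mm_shift (p t : V → ℝ) (c : ℝ) :
    Mm G β p (fun i => t i + c) =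
      Real.exp (2 * c) • Mm G β (fun i => p i * Real.exp (-c)) t := by
  ext i j
  have h2 : ∀ a b : ℝ, Real.exp (a + c + (b + c)) = Real.exp (2 * c) * Real.exp (a + b) := by
    intro a b; rw [← Real.exp_add]; ring_nf
  have h1 : ∀ a q : ℝ, q * Real.exp (a + c)
      = Real.exp (2 * c) * (q * Real.exp (-c) * Real.exp a) := by
    intro a q
    rw [show a + c = 2 * c + -c + a by ring, Real.exp_add, Real.exp_add]; ring
  simp only [Mm, Amat, epsHat, Matrix.add_apply, Matrix.of_apply, Matrix.diagonal_apply,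
    Matrix.smul_apply, smul_eq_mul, h2, h1]
  split_ifs
  · rw [mul_add, Finset.mul_sum]
    congr 1
    exact Finset.sum_congr rfl fun k _ => by ring
  · ring
  · ring

lemma det_shift (p t : V → ℝ) (c : ℝ) :
    (Mm G β p (fun i => t i + c)).det =
      Real.exp (2 * c) ^ Fintype.card V * (Mm G β (fun i => p i * Real.exp (-c)) t).det := by
  rw [Mm_shift, Matrix.det_smul]

lemma Gfun_eq (p t : V → ℝ) (x y : V) :
    Gfun G β p t x y = Real.exp (t x + t y) * (Mm G β p t)⁻¹ x y := rfl

lemma Gfun_shift (p t : V → ℝ) (c : ℝ) (x y : V) :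
    Gfun G β p (fun i => t i + c) x y = Gfun G β (fun i => p i * Real.exp (-c)) t x y := by
  rw [Gfun_eq, Gfun_eq, Mm_shift]
  have hc := (Real.exp_pos (2 * c)).ne'
  have hinv : (Real.exp (2 * c) • Mm G β (fun i => p i * Real.exp (-c)) t)⁻¹
      = (Real.exp (2 * c))⁻¹ • (Mm G β (fun i => p i * Real.exp (-c)) t)⁻¹ := by
    by_cases h : IsUnit (Mm G β (fun i => p i * Real.exp (-c)) t).det
    · have := Matrix.inv_smul' (A := Mm G β (fun i => p i * Real.exp (-c)) t)
        (Units.mk0 _ hc) h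
      exact this
    · rw [Matrix.nonsing_inv_apply_not_isUnit _ h, Matrix.nonsing_inv_apply_not_isUnit, smul_zero]
      rw [Matrix.det_smul, isUnit_iff_ne_zero, not_not]
      rw [isUnit_iff_ne_zero, not_not] at h
      rw [h, mul_zero]
  rw [hinv, Matrix.smul_apply, smul_eq_mul,
    show t x + c + (t y + c) = 2 * c + (t x + t y) by ring, Real.exp_add, ← mul_assoc,
    mul_right_comm (Real.exp (2 * c)), mul_inv_cancel₀ hc, one_mul]

end LinAlg

/-! ### The `t`-marginal and its domination -/

section Marginal

variable {V : Type*} [Fintype V] [DecidableEq V] {G : SimpleGraph V} {β : V → V → ℝ}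

/-- The density in `t` of the measure after integrating out `s`, with the pinning energy factor
`exp (-pinE p t)` removed. -/
noncomputable def Phi (G : SimpleGraph V) (β : V → V → ℝ) (p : V → ℝ)
    (T : Finset (Sym2 (Option V))) (t : V → ℝ) : ℝ :=
  (∏ j, Real.exp (-t j)) * ((√(2 * π)) ^ Fintype.card V)⁻¹ * Real.exp (-E0 G β t) *
    (1 / √(Mm G β p t).det) * wT β p t T

/-- Oscillation of `t` relative to the base vertex `x`. -/
noncomputable def osc (x : V) (t : V → ℝ) : ℝ := ∑ i, |t i - t x|

lemma continuous_E0 : Continuous (E0 G β) := by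
  unfold E0
  refine continuous_const.mul (continuous_finsetSum _ fun i _ => continuous_finsetSum _ fun j _ => ?_)
  split_ifs
  · exact continuous_const.mul
      ((Real.continuous_cosh.comp (by fun_prop)).sub continuous_const)
  · exact continuous_const

lemma continuous_pinE (p : V → ℝ) : Continuous (pinE p) := by
  unfold pinE
  refine continuous_finsetSum _ fun i _ => continuous_const.mul ?_
  exact (Real.continuous_cosh.comp (by fun_prop)).sub continuous_const

lemma continuous_Mm_t (p : V → ℝ) : Continuous (Mm G β p) :=
  continuous_Mm.comp (continuous_const.prodMk continuous_id)

lemma continuous_extV (a : Option V) : Continuous fun t : V → ℝ => extV t a := by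
  cases a with
  | none => exact continuous_const
  | some i => exact continuous_apply i

lemma continuous_treeW (p : V → ℝ) (e : Sym2 (Option V)) :
    Continuous fun t => treeW β p t e := by
  induction e using Sym2.ind with
  | _ a b =>
    have ha := continuous_extV a
    have hb := continuous_extV b
    simp only [treeW, esym, Sym2.lift_mk]
    fun_prop

lemma continuous_wT (p : V → ℝ) (T : Finset (Sym2 (Option V))) :
    Continuous fun t => wT β p t T :=
  continuous_finsetProd _ fun e _ => continuous_treeW p e

lemma continuous_forestW (T : Finset (Sym2 (Option V))) :
    Continuous fun t => forestW β t T :=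
  continuous_finsetProd _ fun e _ => continuous_treeW 0 e

lemma measurable_Phi (p : V → ℝ) (T : Finset (Sym2 (Option V))) : Measurable (Phi G β p T) := by
  unfold Phi
  have h1 : Measurable fun t => (Mm G β p t).det := (continuous_Mm_t p).matrix_det.measurable
  have h2 : Measurable fun t => wT β p t T := (continuous_wT p T).measurable
  have h3 : Measurable (E0 G β) := continuous_E0.measurable
  fun_prop

lemma measurable_Gfun (p : V → ℝ) (x y : V) : Measurable fun t => Gfun G β p t x y := by
  have h1 : Measurable fun t => (Mm G β p t).det := (continuous_Mm_t p).matrix_det.measurable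
  have h2 : Measurable fun t => (Mm G β p t).adjugate x y :=
    ((continuous_Mm_t p).matrix_adjugate.matrix_elem x y).measurable
  simp only [Gfun_eq, Matrix.inv_def, Matrix.smul_apply, Ring.inverse_eq_inv', smul_eq_mul]
  fun_prop

lemma dens_eq (hβ : ∀ i j, β i j = β j i) (p t s : V → ℝ) (T : Finset (Sym2 (Option V))) :
    dens G β p t s T = ((∏ j, Real.exp (-t j)) * ((2 * π) ^ Fintype.card V)⁻¹ *
      Real.exp (-E0 G β t) * Real.exp (-pinE p t) * wT β p t T) *
      Real.exp (-(1 / 2 * (s ⬝ᵥ ((Mm G β p t).mulVec s)))) := by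
  rw [dens, gibbs_prod hβ, Finset.prod_div_distrib, Finset.prod_const, Finset.card_univ, wT]
  ring

/-- Integrating out the Gaussian variables `s`. -/
lemma integral_dens (hG : G.Connected) (hβ : ∀ i j, β i j = β j i)
    (hβp : ∀ i j, G.Adj i j → 0 < β i j) {p : V → ℝ} (hp : ∀ i, 0 ≤ p i) {x : V} (hx : 0 < p x)
    (T : Finset (Sym2 (Option V))) {f : (V → ℝ) → ℝ} (hf : Measurable f)
    (hI : Integrable fun t => Phi G β p T t * Real.exp (-pinE p t) * f t) :
    ∫ q : (V → ℝ) × (V → ℝ), dens G β p q.1 q.2 T * f q.1 =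
      ∫ t, Phi G β p T t * Real.exp (-pinE p t) * f t := by
  set a : (V → ℝ) → ℝ := fun t => (∏ j, Real.exp (-t j)) * ((2 * π) ^ Fintype.card V)⁻¹ *
      Real.exp (-E0 G β t) * Real.exp (-pinE p t) * wT β p t T * f t with ha
  set g : (V → ℝ) → (V → ℝ) → ℝ := fun t s =>
    Real.exp (-(1 / 2 * (s ⬝ᵥ ((Mm G β p t).mulVec s)))) with hg
  have hM := fun t => Mm_posDef hG hβ hβp hp hx t
  have e1 : (fun q : (V → ℝ) × (V → ℝ) => dens G β p q.1 q.2 T * f q.1) =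
      fun q => a q.1 * g q.1 q.2 := by
    ext q; rw [dens_eq hβ, ha, hg]; ring
  have hroot : (√(2 * π)) ^ Fintype.card V * (√(2 * π)) ^ Fintype.card V
      = (2 * π) ^ Fintype.card V := by
    rw [← mul_pow, Real.mul_self_sqrt (by positivity)]
  have e2 : ∀ t, a t * ∫ s, g t s = Phi G β p T t * Real.exp (-pinE p t) * f t := by
    intro t
    rw [hg, (gauss (hM t)).2, ha, Phi, ← hroot]
    have : (√(2 * π)) ^ Fintype.card V ≠ 0 := by positivity
    have := (Real.sqrt_pos.mpr (hM t).det_pos).ne'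
    field_simp
  have hma : Measurable a := by
    have h2 : Measurable fun t => wT β p t T := (continuous_wT p T).measurable
    have h3 : Measurable (E0 G β) := continuous_E0.measurable
    have h4 : Measurable (pinE p) := (continuous_pinE p).measurable
    rw [ha]; fun_prop
  have hmg : Measurable fun q : (V → ℝ) × (V → ℝ) => g q.1 q.2 := by
    refine Continuous.measurable ?_
    have := (continuous_Mm_t (G := G) (β := β) p).comp
      (continuous_fst (X := V → ℝ) (Y := V → ℝ))
    have h5 : Continuous fun q : (V → ℝ) × (V → ℝ) => q.2 ⬝ᵥ ((Mm G β p q.1).mulVec q.2) :=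
      continuous_snd.dotProduct (this.matrix_mulVec continuous_snd)
    exact Real.continuous_exp.comp ((continuous_const.mul h5).neg)
  have hmag : Measurable fun q : (V → ℝ) × (V → ℝ) => a q.1 * g q.1 q.2 :=
    (hma.comp measurable_fst).mul hmg
  have hInt : Integrable (fun q : (V → ℝ) × (V → ℝ) => a q.1 * g q.1 q.2)
      (volume.prod volume) := by
    rw [integrable_prod_iff hmag.aestronglyMeasurable]
    refine ⟨ae_of_all _ fun t => (gauss (hM t)).1.const_mul (a t), ?_⟩
    refine hI.norm.congr (ae_of_all _ fun t => ?_)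
    simp only [norm_mul, integral_const_mul]
    rw [← norm_mul, ← norm_mul, ← e2 t, norm_mul]
    congr 1
    rw [hg]
    simp only [Real.norm_eq_abs, Real.abs_exp]
    exact abs_of_nonneg (integral_nonneg fun s => (Real.exp_pos _).le)
  rw [e1, Measure.volume_eq_prod, integral_prod _ hInt]
  refine integral_congr_ae (ae_of_all _ fun t => ?_)
  simp only [integral_const_mul]
  exact e2 t

lemma E0_shift (t : V → ℝ) (c : ℝ) : E0 G β (fun i => t i + c) = E0 G β t := by
  simp [E0]

lemma osc_shift (x : V) (t : V → ℝ) (c : ℝ) : osc x (fun i => t i + c) = osc x t := by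
  simp [osc]

lemma prod_exp_shift (t : V → ℝ) (c : ℝ) :
    ∏ j, Real.exp (-(t j + c)) = (∏ j, Real.exp (-t j)) * (Real.exp c ^ Fintype.card V)⁻¹ := by
  simp only [neg_add, Real.exp_add, Finset.prod_mul_distrib, Finset.prod_const, Finset.card_univ]
  rw [Real.exp_neg, inv_pow]

/-- Moving the zero mode of `t` amounts to rescaling the pinning. -/
lemma Phi_shift {T : Finset (Sym2 (Option V))} (hT : T ∈ STrees (aug G)) (p t : V → ℝ) (c : ℝ) :
    Phi G β p T (fun i => t i + c) = Phi G β (fun i => p i * Real.exp (-c)) T t := by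
  rw [Phi, Phi, prod_exp_shift, E0_shift, det_shift, wT_shift hT]
  have h4 : Real.exp (2 * c) = Real.exp c * Real.exp c := by rw [← Real.exp_add]; ring_nf
  have h5 : (Real.exp c * Real.exp c) ^ Fintype.card V
      = Real.exp c ^ Fintype.card V * Real.exp c ^ Fintype.card V := mul_pow _ _ _
  have h6 : (0:ℝ) ≤ Real.exp c ^ Fintype.card V := by positivity
  rw [h4, h5, Real.sqrt_mul (mul_nonneg h6 h6), Real.sqrt_mul_self h6]
  have : Real.exp c ^ Fintype.card V ≠ 0 := by positivity
  generalize Mm G β (fun i => p i * Real.exp (-c)) t = M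
  generalize wT β (fun i => p i * Real.exp (-c)) t T = w
  field_simp

lemma Phi_nonneg (hβp : ∀ i j, G.Adj i j → 0 < β i j) {p : V → ℝ} (hp : ∀ i, 0 ≤ p i)
    {T : Finset (Sym2 (Option V))} (hT : T ∈ STrees (aug G)) (t : V → ℝ) :
    0 ≤ Phi G β p T t := by
  have h1 := (forestW_pos hβp hT t).le
  have h2 : 0 ≤ ∏ i ∈ roots T, p i * Real.exp (t i) :=
    Finset.prod_nonneg fun i _ => mul_nonneg (hp i) (Real.exp_pos _).le
  have h3 : 0 ≤ ∏ j, Real.exp (-t j) := Finset.prod_nonneg fun i _ => (Real.exp_pos _).le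
  rw [Phi, wT_split hT]
  positivity

lemma prod_exp_le (s : Finset V) (t : V → ℝ) :
    ∏ i ∈ s, Real.exp (t i) ≤ Real.exp (∑ i, |t i|) := by
  rw [← Real.exp_sum, Real.exp_le_exp]
  calc _ ≤ ∑ i ∈ s, |t i| := Finset.sum_le_sum fun i _ => le_abs_self _
    _ ≤ _ := Finset.sum_le_sum_of_subset_of_nonneg (Finset.subset_univ _)
      fun _ _ _ => abs_nonneg _

lemma Mm_smul_posDef {M : Matrix V V ℝ} (hM : M.PosDef) {c : ℝ} (hc : 0 < c) : (c • M).PosDef :=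
  hM.smul hc

lemma det_lower (hG : G.Connected) (hβ : ∀ i j, β i j = β j i)
    (hβp : ∀ i j, G.Adj i j → 0 < β i j) {p : V → ℝ} (hp : ∀ i, 0 ≤ p i) {x : V} (hx : 0 < p x)
    (t : V → ℝ) :
    1 / √(Mm G β p t).det ≤ (√((Amat G β 0).adjugate x x))⁻¹ *
      Real.exp (Fintype.card V * ∑ i, |t i|) * (√(p x))⁻¹ := by
  set D := ∑ i, |t i| with hD
  have hle : ∀ i j, Real.exp (-(2 * D)) ≤ Real.exp (t i + t j) := fun i j => by
    have h1 := (abs_le.mp (abs_le_sum_abs t i)).1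
    have h2 := (abs_le.mp (abs_le_sum_abs t j)).1
    exact Real.exp_le_exp.mpr (by linarith)
  have hle1 : Real.exp (-(2 * D)) ≤ Real.exp (t x) := by
    have h1 := (abs_le.mp (abs_le_sum_abs t x)).1
    have : 0 ≤ D := Finset.sum_nonneg fun i _ => abs_nonneg _
    exact Real.exp_le_exp.mpr (by linarith)
  have hN := Mm_posDef hG hβ hβp (singlePin_nonneg x hx.le) (singlePin_pos x hx) 0
  have h := det_mono (Mm_posDef hG hβ hβp hp hx t)
    (Mm_smul_posDef hN (Real.exp_pos (-(2 * D)))) (fun s => by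
      rw [Matrix.smul_mulVec, dotProduct_smul, smul_eq_mul, Mm_quad hβ, Mm_quad hβ, mul_add]
      refine add_le_add ?_ ?_
      · rw [mul_left_comm, Finset.mul_sum]
        refine mul_le_mul_of_nonneg_left (Finset.sum_le_sum fun i _ => ?_) (by norm_num)
        rw [Finset.mul_sum]
        refine Finset.sum_le_sum fun j _ => ?_
        split_ifs with hij
        · have := hβp i j hij
          simp only [Pi.zero_apply, add_zero, Real.exp_zero, mul_one]
          calc _ = β i j * (s i - s j) ^ 2 * Real.exp (-(2 * D)) := by ring
            _ ≤ β i j * (s i - s j) ^ 2 * Real.exp (t i + t j) :=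
              mul_le_mul_of_nonneg_left (hle i j) (by positivity)
            _ = _ := by ring
        · simp
      · have e : ∑ i, singlePin x (p x) i * Real.exp ((0 : V → ℝ) i) * s i ^ 2
            = p x * s x ^ 2 := by
          simp [singlePin]
        rw [e]
        have := Finset.single_le_sum (f := fun i => p i * Real.exp (t i) * s i ^ 2)
          (fun j _ => mul_nonneg (mul_nonneg (hp j) (Real.exp_pos _).le) (sq_nonneg _))
          (Finset.mem_univ x)
        refine le_trans ?_ this
        calc _ = p x * s x ^ 2 * Real.exp (-(2 * D)) := by ring
            _ ≤ p x * s x ^ 2 * Real.exp (t x) := by gcongr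
            _ = _ := by ring)
  refine h.trans (le_of_eq ?_)
  rw [Matrix.det_smul, det_single hβ, Pi.zero_apply, Real.exp_zero, mul_one]
  have e : Real.exp (-(2 * D)) ^ Fintype.card V
      = (Real.exp (Fintype.card V * D))⁻¹ * (Real.exp (Fintype.card V * D))⁻¹ := by
    rw [← Real.exp_nat_mul, ← Real.exp_neg, ← Real.exp_add]; ring_nf
  rw [e, Real.sqrt_mul (by positivity), Real.sqrt_mul_self (by positivity), Real.sqrt_mul hx.le]
  simp only [one_div, mul_inv, inv_inv]
  ring

/-- Domination of the marginal density: up to a constant and an exponential in the oscillation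
of `t`, only the interior energy and the zero mode `t_x` matter. -/
lemma Phi_le (hG : G.Connected) (hβ : ∀ i j, β i j = β j i)
    (hβp : ∀ i j, G.Adj i j → 0 < β i j) (x : V) {T : Finset (Sym2 (Option V))}
    (hT : T ∈ STrees (aug G)) :
    ∃ C K : ℝ, 0 ≤ C ∧ ∀ (p : V → ℝ), (∀ i, 0 ≤ p i) → 0 < p x → ∀ t : V → ℝ,
      Phi G β p T t ≤ C * (Real.exp (K * osc x t) * Real.exp (-E0 G β t)) *
        ((∏ i ∈ roots T, p i * Real.exp (-t x)) * (√(p x * Real.exp (-t x)))⁻¹) := by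
  set κ : ℝ := ((√(2 * π)) ^ Fintype.card V)⁻¹ with hκ
  have hκ0 : 0 ≤ κ := by positivity
  have hF := (forestW_pos hβp hT 0).le
  refine ⟨κ * (√((Amat G β 0).adjugate x x))⁻¹ * forestW β 0 T,
    3 * Fintype.card V + 2, by positivity, fun p hp hx t => ?_⟩
  set q : V → ℝ := fun i => p i * Real.exp (-t x) with hq
  have hq0 : ∀ i, 0 ≤ q i := fun i => mul_nonneg (hp i) (Real.exp_pos _).le
  have hqx : 0 < q x := mul_pos hx (Real.exp_pos _)
  set d : V → ℝ := fun i => t i + -t x with hd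
  have e1 : Phi G β p T t = Phi G β q T d := by
    have : t = fun i => d i + t x := by ext i; simp [hd]
    conv_lhs => rw [this]
    rw [Phi_shift hT]
  have e2 : E0 G β t = E0 G β d := (E0_shift t (-t x)).symm
  have e3 : osc x t = ∑ i, |d i| := by simp only [osc, hd, sub_eq_add_neg]
  rw [e1, e2, e3, Phi, wT_split hT]
  set D := ∑ i, |d i| with hD
  have b1 : ∏ j, Real.exp (-d j) ≤ Real.exp D := by
    have := prod_exp_le Finset.univ (fun j => -d j)
    simpa only [abs_neg] using this
  have b2 := det_lower hG hβ hβp hq0 hqx d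
  have b3 := forestW_le hβp hT d
  have b4 : ∏ i ∈ roots T, q i * Real.exp (d i) ≤ (∏ i ∈ roots T, q i) * Real.exp D := by
    rw [Finset.prod_mul_distrib]
    exact mul_le_mul_of_nonneg_left (prod_exp_le _ d) (Finset.prod_nonneg fun i _ => hq0 i)
  have hR : 0 ≤ ∏ i ∈ roots T, q i := Finset.prod_nonneg fun i _ => hq0 i
  have hfd := (forestW_pos hβp hT d).le
  have hw : forestW β d T * ∏ i ∈ roots T, q i * Real.exp (d i) ≤
      (forestW β 0 T * Real.exp (2 * Fintype.card V * D)) *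
        ((∏ i ∈ roots T, q i) * Real.exp D) :=
    mul_le_mul b3 b4 (Finset.prod_nonneg fun i _ => mul_nonneg (hq0 i) (Real.exp_pos _).le)
      (by positivity)
  have hw0 : 0 ≤ forestW β d T * ∏ i ∈ roots T, q i * Real.exp (d i) :=
    mul_nonneg hfd (Finset.prod_nonneg fun i _ => mul_nonneg (hq0 i) (Real.exp_pos _).le)
  calc _ ≤ Real.exp D * κ * Real.exp (-E0 G β d) *
        ((√((Amat G β 0).adjugate x x))⁻¹ * Real.exp (Fintype.card V * D) * (√(q x))⁻¹) *
        ((forestW β 0 T * Real.exp (2 * Fintype.card V * D)) *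
          ((∏ i ∈ roots T, q i) * Real.exp D)) := by gcongr
    _ = _ := by
        have : Real.exp ((3 * Fintype.card V + 2) * D) = Real.exp D *
            Real.exp (Fintype.card V * D) * Real.exp (2 * Fintype.card V * D) * Real.exp D := by
          simp only [← Real.exp_add]; ring_nf
        rw [this]; ring

lemma one_add_sq_le_cosh (r : ℝ) : r ^ 2 / 2 ≤ Real.cosh r - 1 := by
  have h1 : Real.cosh r = 1 + 2 * Real.sinh (r / 2) ^ 2 := by
    have := Real.cosh_two_mul (r / 2)
    rw [show 2 * (r / 2) = r by ring, Real.cosh_sq] at this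
    linarith
  have h2 : |r / 2| ≤ |Real.sinh (r / 2)| := by
    rw [Real.abs_sinh]
    exact Real.self_le_sinh_iff.mpr (abs_nonneg _)
  have h3 := sq_le_sq.mpr h2
  rw [h1]; nlinarith

lemma E0_coercive (hG : G.Connected) (hβ : ∀ i j, β i j = β j i)
    (hβp : ∀ i j, G.Adj i j → 0 < β i j) (x : V) :
    ∃ η : ℝ, 0 < η ∧ ∀ t : V → ℝ, η * ∑ i, t i ^ 2 ≤ E0 G β t + 1 / 2 * t x ^ 2 := by
  obtain ⟨η, hη, h⟩ := posDef_coercive (Mm_posDef hG hβ hβp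
    (singlePin_nonneg x zero_le_one) (singlePin_pos x one_pos) 0)
  refine ⟨η / 2, by positivity, fun t => ?_⟩
  have h1 := h t
  rw [Mm_quad hβ] at h1
  have e : ∑ i, singlePin x 1 i * Real.exp ((0 : V → ℝ) i) * t i ^ 2 = t x ^ 2 := by
    simp [singlePin]
  rw [e] at h1
  have h2 : (1 / 2) * (1 / 2 * ∑ i, ∑ j, if G.Adj i j then
      β i j * Real.exp ((0 : V → ℝ) i + (0 : V → ℝ) j) * (t i - t j) ^ 2 else 0) ≤ E0 G β t := by
    rw [mul_left_comm, E0]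
    refine mul_le_mul_of_nonneg_left ?_ (by norm_num)
    rw [Finset.mul_sum]
    refine Finset.sum_le_sum fun i _ => ?_
    rw [Finset.mul_sum]
    refine Finset.sum_le_sum fun j _ => ?_
    split_ifs with hij
    · have h3 := one_add_sq_le_cosh (t i - t j)
      have := hβp i j hij
      simp only [Pi.zero_apply, add_zero, Real.exp_zero, mul_one]
      nlinarith
    · simp
  linarith

lemma continuous_osc (x : V) : Continuous (osc x) := by
  unfold osc; fun_prop

lemma osc_le (x : V) (t : V → ℝ) : osc x t ≤ (1 + Fintype.card V) * ∑ i, |t i| := by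
  calc osc x t ≤ ∑ i, (|t i| + ∑ k, |t k|) := Finset.sum_le_sum fun _ _ =>
        (abs_sub _ _).trans (add_le_add le_rfl (abs_le_sum_abs t x))
    _ = _ := by
        rw [Finset.sum_add_distrib, Finset.sum_const, Finset.card_univ, nsmul_eq_mul]; ring

lemma osc_nonneg (x : V) (t : V → ℝ) : 0 ≤ osc x t := Finset.sum_nonneg fun _ _ => abs_nonneg _

/-- The interior energy controls all modes of `t` but the zero mode. By gauge exchange, the
zero-mode profile may be replaced by a Gaussian. -/
lemma integrable_osc (hG : G.Connected) (hβ : ∀ i j, β i j = β j i)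
    (hβp : ∀ i j, G.Adj i j → 0 < β i j) (x : V) (K : ℝ) {φ : ℝ → ℝ} (hφ : Measurable φ)
    (hφ0 : ∀ r, 0 ≤ φ r) (hφi : ∫⁻ r, ENNReal.ofReal (φ r) ≠ ⊤) :
    Integrable fun t : V → ℝ =>
      Real.exp (K * osc x t) * Real.exp (-E0 G β t) * φ (t x) := by
  obtain ⟨η, hη, hc⟩ := E0_coercive hG hβ hβp x
  have hmO : Measurable (osc x) := (continuous_osc x).measurable
  have hmE : Measurable (E0 G β) := continuous_E0.measurable
  set h : (V → ℝ) → ENNReal := fun t =>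
    ENNReal.ofReal (Real.exp (K * osc x t) * Real.exp (-E0 G β t)) with hh
  have hmh : Measurable h := by rw [hh]; fun_prop
  have hg := gauge_exchange (h := h) hmh
    (fun t c => by simp only [hh, E0_shift, osc_shift])
    (l := fun t => t x) (m := fun t => t x) (measurable_pi_apply x) (measurable_pi_apply x)
    (fun t c => rfl) (fun t c => rfl)
    (φ := fun r => ENNReal.ofReal (φ r))
    (ψ := fun q => ENNReal.ofReal (Real.exp (-(1 / 2) * q ^ 2))) (by fun_prop) (by fun_prop)
  rw [lintegral_gauss_univ] at hg
  have hInt : Integrable fun t : V → ℝ =>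
      Real.exp (K * osc x t) * Real.exp (-E0 G β t) * Real.exp (-(1 / 2) * (t x) ^ 2) := by
    refine (integrable_exp_abs_gauss hη (|K| * (1 + Fintype.card V))).mono'
      (by fun_prop) (ae_of_all _ fun t => ?_)
    rw [Real.norm_of_nonneg (by positivity), ← Real.exp_add, ← Real.exp_add, Real.exp_le_exp]
    have h1 := hc t
    have h2 : K * osc x t ≤ |K| * ((1 + Fintype.card V) * ∑ i, |t i|) :=
      mul_le_mul (le_abs_self K) (osc_le x t) (osc_nonneg x t) (abs_nonneg K)
    linarith
  have hfin : ∫⁻ t : V → ℝ, h t * ENNReal.ofReal (Real.exp (-(1 / 2) * (t x) ^ 2)) ≠ ⊤ := by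
    have := hInt.lintegral_lt_top.ne
    convert this using 3 with t
    rw [hh, ← ENNReal.ofReal_mul (by positivity)]
  have hfin2 : ∫⁻ t : V → ℝ, h t * ENNReal.ofReal (φ (t x)) ≠ ⊤ := by
    intro htop
    rw [htop, ENNReal.mul_top (by simp [Real.pi_pos])] at hg
    exact ENNReal.mul_ne_top hφi hfin hg.symm
  refine ⟨by fun_prop, ?_⟩
  rw [hasFiniteIntegral_iff_ofReal (ae_of_all _ fun t => mul_nonneg (by positivity) (hφ0 _))]
  convert hfin2.lt_top using 3 with t
  rw [hh, ← ENNReal.ofReal_mul (by positivity)]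

end Marginal

/-! ### Expectations under single-vertex pinning -/

section Single

variable {V : Type*} [Fintype V] [DecidableEq V] {G : SimpleGraph V} {β : V → V → ℝ}

/-- The gauge-covariant part of the `t`-marginal common to all single-vertex pinnings; it has
degree `-1` under translations of `t`. The vertex `x` only serves to select a cofactor and a
root, and does not influence the value. -/
noncomputable def Qf (G : SimpleGraph V) (β : V → V → ℝ) (x : V) (t : V → ℝ) : ℝ :=
  (∏ j, Real.exp (-t j)) * ((√(2 * π)) ^ Fintype.card V)⁻¹ * Real.exp (-E0 G β t) *
    (treeSum G β t x / √((Amat G β t).adjugate x x))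

/-- Zero-mode density under pinning of strength `c` at a single vertex. -/
noncomputable def psi (c r : ℝ) : ℝ :=
  √c * Real.exp (r / 2) * Real.exp (-(c * (Real.cosh r - 1)))

lemma measurable_psi (c : ℝ) : Measurable (psi c) := by
  have : Measurable Real.cosh := Real.continuous_cosh.measurable
  unfold psi; fun_prop

lemma psi_nonneg (c r : ℝ) : 0 ≤ psi c r := by unfold psi; positivity

lemma measurable_Qf (x : V) : Measurable (Qf G β x) := by
  have h1 : Measurable fun t => (Amat G β t).adjugate x x :=
    (continuous_Amat.matrix_adjugate.matrix_elem x x).measurable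
  have h2 : Measurable fun t => treeSum G β t x := by
    unfold treeSum
    exact (continuous_finsetSum _ fun T _ => continuous_forestW T).measurable
  have h3 : Measurable (E0 G β) := continuous_E0.measurable
  unfold Qf
  fun_prop

lemma Qf_eq (hβ : ∀ i j, β i j = β j i) (x z : V) (t : V → ℝ) : Qf G β x t = Qf G β z t := by
  rw [Qf, Qf, treeSum_eq t x z, adj_const hβ t x x z z]

lemma Qf_pos (hG : G.Connected) (hβ : ∀ i j, β i j = β j i)
    (hβp : ∀ i j, G.Adj i j → 0 < β i j) (x : V) (t : V → ℝ) : 0 < Qf G β x t := by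
  have h1 := treeSum_pos hG hβp t x
  have h2 := tau_pos hG hβ hβp t x
  have h3 : 0 < ∏ j, Real.exp (-t j) := Finset.prod_pos fun i _ => Real.exp_pos _
  unfold Qf
  positivity

/-- Under pinning at `z` alone, only trees with the single root `z` carry weight. -/
lemma wT_single_ne [Nonempty V] {T : Finset (Sym2 (Option V))} (hT : T ∈ STrees (aug G)) {z : V}
    (hr : roots T ≠ {z}) (c : ℝ) (t : V → ℝ) : wT β (singlePin z c) t T = 0 := by
  obtain ⟨i, hi, hiz⟩ : ∃ i ∈ roots T, i ≠ z := by
    by_contra! h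
    exact hr ((Finset.Nonempty.subset_singleton_iff (roots_nonempty hT)).mp
      fun i hi => Finset.mem_singleton.mpr (h i hi))
  rw [wT_split hT, Finset.prod_eq_zero hi (by simp [singlePin, hiz]), mul_zero]

lemma Phi_single_ne [Nonempty V] {T : Finset (Sym2 (Option V))} (hT : T ∈ STrees (aug G)) {z : V}
    (hr : roots T ≠ {z}) (c : ℝ) (t : V → ℝ) : Phi G β (singlePin z c) T t = 0 := by
  rw [Phi, wT_single_ne hT hr, mul_zero]

lemma Phi_single_sum [Nonempty V] (hβ : ∀ i j, β i j = β j i) (z : V) {c : ℝ} (hc : 0 < c)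
    (t : V → ℝ) :
    ∑ T ∈ (STrees (aug G)).filter (fun T => roots T = {z}), Phi G β (singlePin z c) T t =
      √c * Real.exp (t z / 2) * Qf G β z t := by
  have e : ∀ T ∈ (STrees (aug G)).filter (fun T => roots T = {z}),
      Phi G β (singlePin z c) T t = ((∏ j, Real.exp (-t j)) * ((√(2 * π)) ^ Fintype.card V)⁻¹ *
        Real.exp (-E0 G β t) * (1 / √(Mm G β (singlePin z c) t).det) * (c * Real.exp (t z))) *
          forestW β t T := by
    intro T hT
    rw [Finset.mem_filter] at hT
    rw [Phi, wT_split hT.1, hT.2, Finset.prod_singleton]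
    simp only [singlePin, if_true]
    ring
  rw [Finset.sum_congr rfl e, ← Finset.mul_sum, ← treeSum, det_single hβ, Qf]
  have h1 : √(c * Real.exp (t z) * (Amat G β t).adjugate z z)
      = √c * Real.exp (t z / 2) * √((Amat G β t).adjugate z z) := by
    rw [Real.sqrt_mul (by positivity), Real.sqrt_mul hc.le, Real.exp_half]
  have h2 : c * Real.exp (t z) = (√c * Real.exp (t z / 2)) * (√c * Real.exp (t z / 2)) := by
    rw [mul_mul_mul_comm, Real.mul_self_sqrt hc.le, ← Real.exp_add, add_halves]
  have h3 : √c * Real.exp (t z / 2) ≠ 0 := by positivity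
  rw [h1, h2]
  generalize √c * Real.exp (t z / 2) = w at h3
  field_simp

lemma Qf_shift [Nonempty V] (hβ : ∀ i j, β i j = β j i) (z : V) (t : V → ℝ) (c : ℝ) :
    Qf G β z (fun i => t i + c) = Real.exp (-c) * Qf G β z t := by
  have e : (fun i => singlePin z 1 i * Real.exp (-c)) = singlePin z (Real.exp (-c)) := by
    ext i; simp only [singlePin]; split_ifs <;> simp
  have h1 := Phi_single_sum (G := G) hβ z one_pos (fun i => t i + c)
  have h2 := Phi_single_sum (G := G) hβ z (Real.exp_pos (-c)) t
  rw [Finset.sum_congr rfl fun T hT => Phi_shift (Finset.mem_filter.mp hT).1 _ t c, e, h2,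
    Real.sqrt_one, one_mul, ← Real.exp_half, add_div, Real.exp_add, neg_div] at h1
  have h3 : Real.exp (-c) = Real.exp (-(c / 2)) * Real.exp (-(c / 2)) := by
    rw [← Real.exp_add]; ring_nf
  have h4 : Real.exp (-(c / 2)) * Real.exp (c / 2) = 1 := by rw [← Real.exp_add]; simp
  have h5 := (Real.exp_pos (t z / 2)).ne'
  refine mul_left_cancel₀ h5 ?_
  rw [h3]
  linear_combination (-Real.exp (-(c/2))) * h1
    - (Real.exp (t z / 2) * Qf G β z (fun i => t i + c)) * h4

/-- Translation invariant part of the integrand for the observable `O^π`. -/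
noncomputable def hS (G : SimpleGraph V) (β : V → V → ℝ) (pv : V → ℝ) (z w : V) (t : V → ℝ) : ℝ :=
  Qf G β z t * (Real.exp (t z + t w) / (pv z * Real.exp (t z) + pv w * Real.exp (t w)))

lemma measurable_hS (pv : V → ℝ) (z w : V) : Measurable (hS G β pv z w) := by
  have := measurable_Qf (G := G) (β := β) z
  unfold hS; fun_prop

lemma hS_nonneg (hG : G.Connected) (hβ : ∀ i j, β i j = β j i)
    (hβp : ∀ i j, G.Adj i j → 0 < β i j) {pv : V → ℝ} (hp : ∀ i, 0 ≤ pv i) (z w : V)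
    (t : V → ℝ) : 0 ≤ hS G β pv z w t := by
  have h1 := hp z
  have h2 := hp w
  have := (Qf_pos hG hβ hβp z t).le
  unfold hS; positivity

lemma hS_shift [Nonempty V] (hβ : ∀ i j, β i j = β j i) (pv : V → ℝ) (z w : V) (t : V → ℝ)
    (c : ℝ) : hS G β pv z w (fun i => t i + c) = hS G β pv z w t := by
  rw [hS, hS, Qf_shift hβ, show t z + c + (t w + c) = c + c + (t z + t w) by ring, Real.exp_add,
    Real.exp_add c c, Real.exp_add (t z) c, Real.exp_add (t w) c, Real.exp_neg]
  rw [show pv z * (Real.exp (t z) * Real.exp c) + pv w * (Real.exp (t w) * Real.exp c)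
    = Real.exp c * (pv z * Real.exp (t z) + pv w * Real.exp (t w)) by ring]
  have := Real.exp_pos c
  rw [mul_assoc (Real.exp c), mul_div_mul_left _ _ this.ne']
  field_simp

lemma pinE_single (z : V) (c : ℝ) (t : V → ℝ) :
    pinE (singlePin z c) t = c * (Real.cosh (t z) - 1) := by
  simp [pinE, singlePin]

lemma measurable_obs (pv : V → ℝ) (z w : V) (T : Finset (Sym2 (Option V))) :
    Measurable fun t => obs pv z w t T := by
  unfold obs; fun_prop

lemma obs_nonneg {pv : V → ℝ} (hp : ∀ i, 0 ≤ pv i) (z w : V) (t : V → ℝ)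
    (T : Finset (Sym2 (Option V))) : 0 ≤ obs pv z w t T := by
  have h1 := hp z
  have h2 := hp w
  unfold obs; split_ifs <;> positivity

lemma obs_le {pv : V → ℝ} (hp : ∀ i, 0 ≤ pv i) {z w : V} (hw : 0 < pv w) (t : V → ℝ)
    (T : Finset (Sym2 (Option V))) : obs pv z w t T ≤ Real.exp (t z) / pv w := by
  have h1 := hp z
  have h3 : Real.exp (t z + t w) / (pv z * Real.exp (t z) + pv w * Real.exp (t w))
      ≤ Real.exp (t z) / pv w := by
    rw [div_le_div_iff₀ (by positivity) hw, Real.exp_add]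
    have : 0 ≤ Real.exp (t z) * (pv z * Real.exp (t z)) := by positivity
    nlinarith
  unfold obs
  split_ifs
  · rwa [mul_one]
  · rw [mul_zero]; positivity

lemma integrable_single [Nonempty V] (hG : G.Connected) (hβ : ∀ i j, β i j = β j i)
    (hβp : ∀ i j, G.Adj i j → 0 < β i j) {pv : V → ℝ} (hp : ∀ i, 0 ≤ pv i) {z w : V}
    (hw : 0 < pv w) {c : ℝ} (hc : 0 < c) {T : Finset (Sym2 (Option V))}
    (hT : T ∈ STrees (aug G)) :
    Integrable fun t => Phi G β (singlePin z c) T t * Real.exp (-pinE (singlePin z c) t) *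
      obs pv z w t T := by
  by_cases hr : roots T = {z}
  swap
  · simp [Phi_single_ne hT hr]
  obtain ⟨C, K, hC, h⟩ := Phi_le hG hβ hβp z hT
  have hI := integrable_osc hG hβ hβp z K (measurable_psi c) (psi_nonneg c)
    (by rw [show (∫⁻ r, ENNReal.ofReal (psi c r)) = _ from lintegral_psi hc]
        exact ENNReal.ofReal_ne_top)
  refine (hI.const_mul (C / pv w)).mono' ?_ (ae_of_all _ fun t => ?_)
  · have h1 := measurable_Phi (G := G) (β := β) (singlePin z c) T
    have h2 := (continuous_pinE (singlePin z c)).measurable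
    have h3 := measurable_obs pv z w T
    fun_prop
  · have hP0 := Phi_nonneg hβp (singlePin_nonneg z hc.le) hT t
    have hO0 := obs_nonneg hp z w t T
    rw [Real.norm_of_nonneg (by positivity)]
    have h1 := h _ (singlePin_nonneg z hc.le) (singlePin_pos z hc) t
    rw [hr, Finset.prod_singleton] at h1
    simp only [singlePin, if_true] at h1
    have h2 : √(c * Real.exp (-t z)) = √c * Real.exp (-t z / 2) := by
      rw [Real.sqrt_mul hc.le, Real.exp_half]
    have h3 : c * Real.exp (-t z) = (√c * Real.exp (-t z / 2)) * (√c * Real.exp (-t z / 2)) := by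
      rw [mul_mul_mul_comm, Real.mul_self_sqrt hc.le, ← Real.exp_add, add_halves]
    have h4 : √c * Real.exp (-t z / 2) ≠ 0 := by positivity
    rw [h2, h3, mul_assoc _ _ (_⁻¹), mul_inv_cancel₀ h4, mul_one] at h1
    calc _ ≤ (C * (Real.exp (K * osc z t) * Real.exp (-E0 G β t)) *
          (√c * Real.exp (-t z / 2))) * Real.exp (-pinE (singlePin z c) t) *
          (Real.exp (t z) / pv w) := by
          have := obs_le hp (z := z) hw t T
          gcongr
      _ = _ := by
          rw [pinE_single, psi]
          have : Real.exp (t z / 2) = Real.exp (-t z / 2) * Real.exp (t z) := by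
            rw [← Real.exp_add]; ring_nf
          rw [this]; ring

/-- Under pinning at `z`, all vertices hang off the root `z`, so the indicator in `O^π` is
trivial. -/
lemma expect_single [Nonempty V] (hG : G.Connected) (hβ : ∀ i j, β i j = β j i)
    (hβp : ∀ i j, G.Adj i j → 0 < β i j) {pv : V → ℝ} (hp : ∀ i, 0 ≤ pv i) {z w : V}
    (hw : 0 < pv w) {c : ℝ} (hc : 0 < c) :
    Integrable (fun t => hS G β pv z w t * psi c (t z)) ∧
    expect G β (singlePin z c) (fun t _ T => obs pv z w t T) =
      ∫ t, hS G β pv z w t * psi c (t z) := by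
  have hsum : ∀ t, ∑ T ∈ STrees (aug G), Phi G β (singlePin z c) T t *
      Real.exp (-pinE (singlePin z c) t) * obs pv z w t T = hS G β pv z w t * psi c (t z) := by
    intro t
    have e1 : ∑ T ∈ STrees (aug G), Phi G β (singlePin z c) T t *
        Real.exp (-pinE (singlePin z c) t) * obs pv z w t T =
        ∑ T ∈ (STrees (aug G)).filter (fun T => roots T = {z}), Phi G β (singlePin z c) T t *
        Real.exp (-pinE (singlePin z c) t) * obs pv z w t T := by
      rw [Finset.sum_filter]
      refine Finset.sum_congr rfl fun T hT => ?_
      split_ifs with hr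
      · rfl
      · rw [Phi_single_ne hT hr]; simp
    have e2 : ∀ T ∈ (STrees (aug G)).filter (fun T => roots T = {z}),
        Phi G β (singlePin z c) T t *
        Real.exp (-pinE (singlePin z c) t) * obs pv z w t T =
        Phi G β (singlePin z c) T t * (Real.exp (-pinE (singlePin z c) t) *
        (Real.exp (t z + t w) / (pv z * Real.exp (t z) + pv w * Real.exp (t w)))) := by
      intro T hT
      rw [Finset.mem_filter] at hT
      have hz : rootEdge z ∈ T := by
        rw [← mem_roots, hT.2]; exact Finset.mem_singleton_self z
      rw [obs, if_pos ⟨hz, forest_reachable hT.1 hT.2 z w⟩, mul_one, mul_assoc]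
    rw [e1, Finset.sum_congr rfl e2, ← Finset.sum_mul, Phi_single_sum hβ z hc, pinE_single, hS,
      psi]
    ring
  have hInt := fun T (hT : T ∈ STrees (aug G)) =>
    integrable_single hG hβ hβp hp (z := z) hw hc hT
  refine ⟨?_, ?_⟩
  · have := integrable_finsetSum (STrees (aug G)) hInt
    exact this.congr (ae_of_all _ fun t => hsum t)
  · rw [expect, ← integral_congr_ae (ae_of_all _ hsum), integral_finsetSum _ hInt]
    refine Finset.sum_congr rfl fun T hT => ?_
    exact integral_dens hG hβ hβp (singlePin_nonneg z hc.le) (singlePin_pos z hc) T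
      (measurable_obs pv z w T) (hInt T hT)

/-- The expectation of `O^π` under single-vertex pinning does not depend on the strength. -/
lemma single_const [Nonempty V] (hG : G.Connected) (hβ : ∀ i j, β i j = β j i)
    (hβp : ∀ i j, G.Adj i j → 0 < β i j) {pv : V → ℝ} (hp : ∀ i, 0 ≤ pv i) (z w : V)
    {c : ℝ} (hc : 0 < c) :
    ∫ t, hS G β pv z w t * psi c (t z) = ∫ t, hS G β pv z w t * psi 1 (t z) := by
  have hm := measurable_hS (G := G) (β := β) pv z w
  have h0 := hS_nonneg hG hβ hβp hp z w
  have hconv : ∀ d : ℝ, ∫ t, hS G β pv z w t * psi d (t z) =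
      (∫⁻ t, ENNReal.ofReal (hS G β pv z w t) * ENNReal.ofReal (psi d (t z))).toReal := by
    intro d
    have := measurable_psi d
    rw [integral_eq_lintegral_of_nonneg_ae
      (ae_of_all _ fun t => mul_nonneg (h0 t) (psi_nonneg d _)) (by fun_prop)]
    simp only [ENNReal.ofReal_mul (h0 _)]
  rw [hconv, hconv]
  have hg := gauge_exchange (h := fun t => ENNReal.ofReal (hS G β pv z w t)) (by fun_prop)
    (fun t c => by simp only [hS_shift hβ])
    (l := fun t => t z) (m := fun t => t z) (measurable_pi_apply z) (measurable_pi_apply z)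
    (fun t c => rfl) (fun t c => rfl)
    (φ := fun r => ENNReal.ofReal (psi c r)) (ψ := fun r => ENNReal.ofReal (psi 1 r))
    (measurable_psi c).ennreal_ofReal (measurable_psi 1).ennreal_ofReal
  rw [show (∫⁻ r, ENNReal.ofReal (psi c r)) = _ from lintegral_psi hc,
    show (∫⁻ r, ENNReal.ofReal (psi 1 r)) = _ from lintegral_psi one_pos] at hg
  congr 1
  refine (ENNReal.mul_right_inj ?_ ENNReal.ofReal_ne_top).mp hg
  simp [Real.pi_pos]

end Single

/-! ### The limit of the rescaled Green's function -/

section Limit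

variable {V : Type*} [Fintype V] [DecidableEq V] {G : SimpleGraph V} {β : V → V → ℝ}

/-- Pinning energy after the zero mode of `t` has been translated by `-log ε`. -/
noncomputable def Ueps (pv : V → ℝ) (ε : ℝ) (t : V → ℝ) : ℝ :=
  ∑ i, pv i * (Real.exp (t i) / 2 + ε ^ 2 * Real.exp (-t i) / 2 - ε)

lemma continuous_Ueps (pv : V → ℝ) (ε : ℝ) : Continuous (Ueps pv ε) := by
  unfold Ueps; fun_prop

lemma pinE_shift (pv : V → ℝ) {ε : ℝ} (hε : 0 < ε) (t : V → ℝ) :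
    pinE (pinOf pv ε) (fun i => t i + -Real.log ε) = Ueps pv ε t := by
  rw [pinE, Ueps]
  refine Finset.sum_congr rfl fun i _ => ?_
  rw [pinOf, Real.cosh_eq, neg_add, neg_neg, Real.exp_add, Real.exp_add, Real.exp_neg (Real.log ε),
    Real.exp_log hε]
  field_simp

lemma pinOf_shift (pv : V → ℝ) {ε : ℝ} (hε : 0 < ε) :
    (fun i => pinOf pv ε i * Real.exp (- -Real.log ε)) = (ε ^ 2) • pv := by
  ext i
  rw [neg_neg, Real.exp_log hε, pinOf, Pi.smul_apply, smul_eq_mul]; ring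

/-- Contribution of the tree `T` to `ε E[G]`, after translating the zero mode by `-log ε`. -/
noncomputable def Fd (G : SimpleGraph V) (β : V → V → ℝ) (pv : V → ℝ) (x y : V)
    (T : Finset (Sym2 (Option V))) (ε : ℝ) (t : V → ℝ) : ℝ :=
  ε * (Phi G β (ε ^ 2 • pv) T t * Real.exp (-Ueps pv ε t) * Gfun G β (ε ^ 2 • pv) t x y)

lemma measurable_Fd (pv : V → ℝ) (x y : V) (T : Finset (Sym2 (Option V))) (ε : ℝ) :
    Measurable (Fd G β pv x y T ε) := by
  have h1 := measurable_Phi (G := G) (β := β) (ε ^ 2 • pv) T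
  have h2 := measurable_Gfun (G := G) (β := β) (ε ^ 2 • pv) x y
  have h3 := (continuous_Ueps pv ε).measurable
  unfold Fd
  fun_prop

/-- Pointwise limit of `Fd`. Trees with at least two roots drop out, through the last factor. -/
noncomputable def Flim (G : SimpleGraph V) (β : V → V → ℝ) (pv : V → ℝ) (x y : V)
    (T : Finset (Sym2 (Option V))) (t : V → ℝ) : ℝ :=
  (∏ j, Real.exp (-t j)) * ((√(2 * π)) ^ Fintype.card V)⁻¹ * Real.exp (-E0 G β t) *
    (1 / √((∑ i, pv i * Real.exp (t i)) * (Amat G β t).adjugate x x)) *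
    (∑ i, pv i * Real.exp (t i))⁻¹ * Real.exp (-((∑ i, pv i * Real.exp (t i)) / 2)) *
    Real.exp (t x + t y) * (wT β pv t T * 0 ^ ((roots T).card - 1))

lemma measurable_Flim (pv : V → ℝ) (x y : V) (T : Finset (Sym2 (Option V))) :
    Measurable (Flim G β pv x y T) := by
  have h1 : Measurable fun t => (Amat G β t).adjugate x x :=
    (continuous_Amat.matrix_adjugate.matrix_elem x x).measurable
  have h2 : Measurable fun t => wT β pv t T := (continuous_wT pv T).measurable
  have h3 : Measurable (E0 G β) := continuous_E0.measurable
  unfold Flim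
  fun_prop

lemma wT_smul {T : Finset (Sym2 (Option V))} (hT : T ∈ STrees (aug G)) (v : ℝ) (pv t : V → ℝ) :
    wT β (v • pv) t T = v ^ (roots T).card * wT β pv t T := by
  rw [wT_split hT, wT_split hT]
  simp only [Pi.smul_apply, smul_eq_mul, mul_assoc, Finset.prod_mul_distrib, Finset.prod_const]
  ring

lemma Fd_tendsto [Nonempty V] (hG : G.Connected) (hβ : ∀ i j, β i j = β j i)
    (hβp : ∀ i j, G.Adj i j → 0 < β i j) {pv : V → ℝ} (hp : ∀ i, 0 ≤ pv i) {x y : V}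
    (hx : 0 < pv x) {T : Finset (Sym2 (Option V))} (hT : T ∈ STrees (aug G)) (t : V → ℝ) :
    Tendsto (fun ε => Fd G β pv x y T ε t) (𝓝[>] 0) (𝓝 (Flim G β pv x y T t)) := by
  set S := ∑ i, pv i * Real.exp (t i) with hS
  have hS0 : 0 < S := sum_exp_pos hp hx t
  have hτ := tau_pos hG hβ hβp t x
  have hr : 1 ≤ (roots T).card := Finset.card_pos.mpr (roots_nonempty hT)
  have hv : Tendsto (fun ε : ℝ => ε ^ 2) (𝓝[>] 0) (𝓝[>] 0) := by
    refine tendsto_nhdsWithin_iff.mpr ⟨?_, ?_⟩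
    · exact tendsto_nhdsWithin_of_tendsto_nhds (by
        simpa using (continuous_pow 2).tendsto (0 : ℝ))
    · filter_upwards [self_mem_nhdsWithin] with ε hε
      exact pow_pos (Set.mem_Ioi.mp hε) 2
  have t1 := (((det_div_tendsto (G := G) hβ pv t x).comp hv).sqrt).inv₀
    (Real.sqrt_pos.mpr (mul_pos hS0 hτ)).ne'
  have t2 := (inv_tendsto hG hβ hβp hp hx t x y).comp hv
  have t3 : Tendsto (fun ε : ℝ => Real.exp (-Ueps pv ε t)) (𝓝[>] 0)
      (𝓝 (Real.exp (-(S / 2)))) := by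
    have hc : Continuous fun ε : ℝ => Real.exp (-Ueps pv ε t) := by unfold Ueps; fun_prop
    have h0 : Ueps pv 0 t = S / 2 := by
      rw [Ueps, hS, Finset.sum_div]
      refine Finset.sum_congr rfl fun i _ => by ring
    have := hc.tendsto 0
    rw [h0] at this
    exact tendsto_nhdsWithin_of_tendsto_nhds this
  have t4 : Tendsto (fun ε : ℝ => (ε ^ 2) ^ ((roots T).card - 1)) (𝓝[>] 0)
      (𝓝 (0 ^ ((roots T).card - 1))) :=
    (tendsto_nhdsWithin_iff.mp hv).1.pow _
  have t5 := ((((t1.mul t2).mul t3).mul t4).const_mul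
    ((∏ j, Real.exp (-t j)) * ((√(2 * π)) ^ Fintype.card V)⁻¹ * Real.exp (-E0 G β t) *
      Real.exp (t x + t y) * wT β pv t T))
  refine (t5.congr' ?_).trans (le_of_eq ?_)
  · filter_upwards [self_mem_nhdsWithin] with ε hε
    have hε : 0 < ε := hε
    have hpos : ∀ i, 0 ≤ (ε ^ 2 • pv) i := fun i => mul_nonneg (sq_nonneg ε) (hp i)
    have hposx : 0 < (ε ^ 2 • pv) x := mul_pos (pow_pos hε 2) hx
    have hdet := (Mm_posDef hG hβ hβp hpos hposx t).det_pos
    rw [Fd, Phi, Gfun_eq, wT_smul hT]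
    simp only [Function.comp_apply]
    rw [Real.sqrt_div hdet.le, Real.sqrt_sq hε.le]
    generalize (Mm G β (ε ^ 2 • pv) t)⁻¹ x y = m
    have hsd := (Real.sqrt_pos.mpr hdet).ne'
    generalize √(Mm G β (ε ^ 2 • pv) t).det = d at hsd
    obtain ⟨k, hk⟩ : ∃ k, (roots T).card = k + 1 := ⟨_, (Nat.sub_add_cancel hr).symm⟩
    rw [hk, Nat.add_sub_cancel, pow_succ]
    field_simp
    ring
  · rw [Flim, one_div]
    congr 1
    ring

lemma Gfun_le (hG : G.Connected) (hβ : ∀ i j, β i j = β j i)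
    (hβp : ∀ i j, G.Adj i j → 0 < β i j) {pv : V → ℝ} (hp : ∀ i, 0 ≤ pv i) {x y : V}
    (hx : 0 < pv x) (hy : 0 < pv y) {v : ℝ} (hv : 0 < v) (t : V → ℝ) :
    |Gfun G β (v • pv) t x y| ≤
      Real.exp (t x) * Real.exp (osc x t) * ((√(pv x * pv y))⁻¹ * v⁻¹) := by
  have h := inv_bound (x := x) (y := y) hG hβ hβp (p := v • pv)
    (fun i => mul_nonneg hv.le (hp i)) (mul_pos hv hy) t
  rw [Gfun_eq, abs_mul, Real.abs_exp]
  set m := (Mm G β (v • pv) t)⁻¹ x y with hm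
  have hs : 0 < √(pv x * pv y) := Real.sqrt_pos.mpr (mul_pos hx hy)
  have e1 : Real.exp ((t x + t y) / 2) * Real.exp ((t x + t y) / 2) = Real.exp (t x + t y) := by
    rw [← Real.exp_add, add_halves]
  set a := Real.exp ((t x + t y) / 2) with ha
  have ha0 : 0 < a := Real.exp_pos _
  have h1 : (√(pv x * pv y) * v * a * |m|) ^ 2 ≤ 1 := by
    refine le_trans (le_of_eq ?_) h
    simp only [Pi.smul_apply, smul_eq_mul]
    rw [mul_pow, mul_pow, mul_pow, Real.sq_sqrt (mul_pos hx hy).le, sq_abs, pow_two a, e1,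
      Real.exp_add]
    ring
  have h2 : √(pv x * pv y) * v * a * |m| ≤ 1 := by
    refine (sq_le_one_iff₀ (by positivity)).mp h1
  have h3 : a ≤ Real.exp (t x) * Real.exp (osc x t) := by
    rw [ha, ← Real.exp_add, Real.exp_le_exp]
    have h4 : |t y - t x| ≤ osc x t :=
      Finset.single_le_sum (f := fun i => |t i - t x|) (fun _ _ => abs_nonneg _)
        (Finset.mem_univ y)
    have := le_abs_self (t y - t x)
    have := osc_nonneg x t
    linarith
  calc Real.exp (t x + t y) * |m|
      = a * ((√(pv x * pv y))⁻¹ * v⁻¹) * (√(pv x * pv y) * v * a * |m|) := by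
        rw [← e1]; field_simp
    _ ≤ a * ((√(pv x * pv y))⁻¹ * v⁻¹) * 1 := by gcongr
    _ ≤ _ := by rw [mul_one]; gcongr

lemma pow_mul_exp_le {a : ℝ} (ha : 0 < a) {q : ℝ} (hq : 0 ≤ q) (n : ℕ) :
    q ^ n * Real.exp (-(a * q)) ≤ n.factorial / a ^ n := by
  have h := Real.pow_div_factorial_le_exp (a * q) (by positivity) n
  rw [div_le_iff₀ (by positivity), mul_pow] at h
  rw [Real.exp_neg, ← div_eq_mul_inv, div_le_div_iff₀ (Real.exp_pos _) (by positivity)]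
  linarith

lemma Ueps_ge {pv : V → ℝ} (hp : ∀ i, 0 ≤ pv i) (x : V) {ε : ℝ} (hε1 : ε ≤ 1) (t : V → ℝ) :
    pv x * Real.exp (t x) / 2 + pv x / 2 * (ε ^ 2 * Real.exp (-t x)) - ∑ i, pv i ≤ Ueps pv ε t := by
  have h := Finset.single_le_sum
    (f := fun i => pv i * (Real.exp (t i) / 2 + ε ^ 2 * Real.exp (-t i) / 2))
    (fun i _ => mul_nonneg (hp i) (by positivity)) (Finset.mem_univ x)
  have h2 : ε * ∑ i, pv i ≤ ∑ i, pv i :=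
    mul_le_of_le_one_left (Finset.sum_nonneg fun i _ => hp i) hε1
  have e : Ueps pv ε t = ∑ i, pv i * (Real.exp (t i) / 2 + ε ^ 2 * Real.exp (-t i) / 2)
      - ε * ∑ i, pv i := by
    rw [Ueps, Finset.mul_sum, ← Finset.sum_sub_distrib]
    exact Finset.sum_congr rfl fun i _ => by ring
  rw [e]
  linarith

/-- A majorant for `Fd`, uniform in `ε`. The powers of `ε² e^{-t_x}` produced by additional roots
are absorbed by the pinning energy. -/
lemma Fd_le [Nonempty V] (hG : G.Connected) (hβ : ∀ i j, β i j = β j i)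
    (hβp : ∀ i j, G.Adj i j → 0 < β i j) {pv : V → ℝ} (hp : ∀ i, 0 ≤ pv i) {x y : V}
    (hx : 0 < pv x) (hy : 0 < pv y) {T : Finset (Sym2 (Option V))} (hT : T ∈ STrees (aug G)) :
    ∃ g : (V → ℝ) → ℝ, Integrable g ∧ ∀ ε, 0 < ε → ε ≤ 1 → ∀ t, |Fd G β pv x y T ε t| ≤ g t := by
  obtain ⟨C, K, hC, h⟩ := Phi_le hG hβ hβp x hT
  set φ : ℝ → ℝ := fun r => Real.exp (r / 2) * Real.exp (-(pv x * Real.exp r / 2)) with hφ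
  have hφi : ∫⁻ r, ENNReal.ofReal (φ r) ≠ ⊤ := by
    have e := lintegral_add_right_eq_self (μ := volume)
      (fun r : ℝ => ENNReal.ofReal (Real.exp (r / 2) * Real.exp (-(Real.exp r / 2))))
      (Real.log (pv x))
    rw [lintegral_kfun] at e
    have e2 : ∀ r, ENNReal.ofReal (Real.exp ((r + Real.log (pv x)) / 2) *
        Real.exp (-(Real.exp (r + Real.log (pv x)) / 2))) =
        ENNReal.ofReal √(pv x) * ENNReal.ofReal (φ r) := by
      intro r
      rw [← ENNReal.ofReal_mul (by positivity), Real.exp_half, Real.exp_add, Real.exp_log hx,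
        Real.sqrt_mul (Real.exp_pos r).le, ← Real.exp_half, hφ]
      congr 1
      ring_nf
    simp only [e2] at e
    rw [lintegral_const_mul _ (by fun_prop)] at e
    intro htop
    rw [htop, ENNReal.mul_top (by simpa using hx)] at e
    exact ENNReal.ofReal_ne_top e.symm
  have hI := integrable_osc hG hβ hβp x (K + 1) (φ := φ) (by fun_prop)
    (fun r => by positivity) hφi
  set n := (roots T).card - 1 with hn
  have hcard : (roots T).card = n + 1 :=
    (Nat.sub_add_cancel (Finset.card_pos.mpr (roots_nonempty hT))).symm
  set P := ∏ i ∈ roots T, pv i with hP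
  have hP0 : 0 ≤ P := Finset.prod_nonneg fun i _ => hp i
  set s := √(pv x * pv y) with hs
  have hs0 : 0 < s := Real.sqrt_pos.mpr (mul_pos hx hy)
  refine ⟨_, hI.const_mul (C * P * (√(pv x))⁻¹ * s⁻¹ * Real.exp (∑ i, pv i) *
    (n.factorial / (pv x / 2) ^ n)), fun ε hε hε1 t => ?_⟩
  have hv : 0 < ε ^ 2 := pow_pos hε 2
  have hpos : ∀ i, 0 ≤ (ε ^ 2 • pv) i := fun i => mul_nonneg hv.le (hp i)
  have hPhi := h (ε ^ 2 • pv) hpos (mul_pos hv hx) t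
  have hPhi0 := Phi_nonneg hβp hpos hT t
  have hGf := Gfun_le hG hβ hβp hp hx hy hv t
  set q := ε ^ 2 * Real.exp (-t x) with hq
  have hq0 : 0 < q := by positivity
  have hU : Real.exp (-Ueps pv ε t) ≤ Real.exp (-(pv x * Real.exp (t x) / 2)) *
      Real.exp (-(pv x / 2 * q)) * Real.exp (∑ i, pv i) := by
    rw [← Real.exp_add, ← Real.exp_add, Real.exp_le_exp]
    have := Ueps_ge hp x hε1 t
    linarith
  have hpow := pow_mul_exp_le (half_pos hx) hq0.le n
  have e1 : ∏ i ∈ roots T, (ε ^ 2 • pv) i * Real.exp (-t x) = P * q ^ (n + 1) := by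
    rw [← hcard, hP, ← Finset.prod_const, ← Finset.prod_mul_distrib]
    exact Finset.prod_congr rfl fun i _ => by simp only [Pi.smul_apply, smul_eq_mul, hq]; ring
  have e2 : √((ε ^ 2 • pv) x * Real.exp (-t x)) = √(pv x) * (ε * Real.exp (-(t x / 2))) := by
    rw [Pi.smul_apply, smul_eq_mul, mul_comm (ε ^ 2), mul_assoc, Real.sqrt_mul hx.le,
      Real.sqrt_mul hv.le, Real.sqrt_sq hε.le, ← neg_div, Real.exp_half]
  rw [e1, e2] at hPhi
  have ex : Real.exp (-t x) = Real.exp (-(t x / 2)) * Real.exp (-(t x / 2)) := by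
    rw [← Real.exp_add]; ring_nf
  have ex2 : Real.exp (t x) = Real.exp (t x / 2) * Real.exp (t x / 2) := by
    rw [← Real.exp_add]; ring_nf
  have ex3 : Real.exp (-(t x / 2)) = (Real.exp (t x / 2))⁻¹ := Real.exp_neg _
  have hsx := Real.sqrt_pos.mpr hx
  rw [Fd, abs_mul, abs_mul, abs_mul, abs_of_pos hε, Real.abs_exp, abs_of_nonneg hPhi0]
  calc _ ≤ ε * ((C * (Real.exp (K * osc x t) * Real.exp (-E0 G β t)) *
        (P * q ^ (n + 1) * (√(pv x) * (ε * Real.exp (-(t x / 2))))⁻¹)) *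
        (Real.exp (-(pv x * Real.exp (t x) / 2)) * Real.exp (-(pv x / 2 * q)) *
          Real.exp (∑ i, pv i)) *
        (Real.exp (t x) * Real.exp (osc x t) * (s⁻¹ * (ε ^ 2)⁻¹))) := by gcongr
    _ = (C * P * (√(pv x))⁻¹ * s⁻¹ * Real.exp (∑ i, pv i)) *
        (Real.exp ((K + 1) * osc x t) * Real.exp (-E0 G β t) * φ (t x)) *
        (q ^ n * Real.exp (-(pv x / 2 * q))) := by
        have e3 : Real.exp ((K + 1) * osc x t) = Real.exp (K * osc x t) * Real.exp (osc x t) := by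
          rw [← Real.exp_add]; ring_nf
        have e4 : q ^ (n + 1) * ((ε * Real.exp (-(t x / 2)))⁻¹ * (ε * (Real.exp (t x) * (ε ^ 2)⁻¹)))
            = q ^ n * Real.exp (t x / 2) := by
          have hE : Real.exp (t x / 2) ≠ 0 := (Real.exp_pos _).ne'
          rw [pow_succ]
          nth_rewrite 2 [hq]
          rw [ex, ex2, ex3]
          field_simp
        rw [e3, hφ, mul_inv]
        simp only
        linear_combination (C * P * (√(pv x))⁻¹ * s⁻¹ * Real.exp (∑ i, pv i) *
          Real.exp (K * osc x t) * Real.exp (osc x t) * Real.exp (-E0 G β t) *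
          Real.exp (-(pv x * Real.exp (t x) / 2)) * Real.exp (-(pv x / 2 * q))) * e4
    _ ≤ (C * P * (√(pv x))⁻¹ * s⁻¹ * Real.exp (∑ i, pv i)) *
        (Real.exp ((K + 1) * osc x t) * Real.exp (-E0 G β t) * φ (t x)) *
        (n.factorial / (pv x / 2) ^ n) := by
        have : 0 ≤ φ (t x) := by rw [hφ]; positivity
        gcongr
    _ = _ := by ring

/-- Translating the zero mode turns `ε E[G]` into a sum of integrals with uniform majorants. -/
lemma expect_eq [Nonempty V] (hG : G.Connected) (hβ : ∀ i j, β i j = β j i)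
    (hβp : ∀ i j, G.Adj i j → 0 < β i j) {pv : V → ℝ} (hp : ∀ i, 0 ≤ pv i) {x y : V}
    (hx : 0 < pv x) (hy : 0 < pv y) {ε : ℝ} (hε : 0 < ε) (hε1 : ε ≤ 1) :
    ε * expect G β (pinOf pv ε) (fun t _ _ => Gfun G β (pinOf pv ε) t x y) =
      ∑ T ∈ STrees (aug G), ∫ t, Fd G β pv x y T ε t := by
  rw [expect, Finset.mul_sum]
  refine Finset.sum_congr rfl fun T hT => ?_
  set H : (V → ℝ) → ℝ := fun t => Phi G β (pinOf pv ε) T t * Real.exp (-pinE (pinOf pv ε) t) *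
    Gfun G β (pinOf pv ε) t x y with hH
  have hshift : ∀ t : V → ℝ, H (t + fun _ => -Real.log ε) = ε⁻¹ * Fd G β pv x y T ε t := by
    intro t
    have e : (t + fun _ => -Real.log ε) = fun i => t i + -Real.log ε := rfl
    rw [hH, e]
    simp only
    rw [Phi_shift hT, pinE_shift pv hε, Gfun_shift, pinOf_shift pv hε, Fd,
      inv_mul_cancel_left₀ hε.ne']
  have hFI : Integrable (Fd G β pv x y T ε) := by
    obtain ⟨g, hg, hle⟩ := Fd_le hG hβ hβp hp hx hy hT
    exact hg.mono' (measurable_Fd pv x y T ε).aestronglyMeasurable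
      (ae_of_all _ fun t => hle ε hε hε1 t)
  have hHI : Integrable H := by
    have h1 : Integrable fun t : V → ℝ => H (t + fun _ => -Real.log ε) := by
      simp only [hshift]; exact hFI.const_mul _
    have h2 := h1.comp_add_right (fun _ => Real.log ε)
    refine h2.congr (ae_of_all _ fun t => ?_)
    simp only
    congr 1
    ext i; simp
  have hε0 : ∀ i, 0 ≤ pinOf pv ε i := fun i => mul_nonneg (hp i) hε.le
  rw [integral_dens hG hβ hβp hε0 (mul_pos hx hε) T (measurable_Gfun (pinOf pv ε) x y) hHI,
    ← integral_add_right_eq_self _ (fun _ : V => -Real.log ε), ← integral_const_mul]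
  refine integral_congr_ae (ae_of_all _ fun t => ?_)
  have := hshift t
  rw [hH] at this
  simp only at this ⊢
  rw [this, mul_inv_cancel_left₀ hε.ne']

/-- Translation-invariant part of the limiting integrand. -/
noncomputable def h1 (G : SimpleGraph V) (β : V → V → ℝ) (pv : V → ℝ) (x y : V) (t : V → ℝ) : ℝ :=
  Qf G β x t * (Real.exp (t x + t y) / ∑ i, pv i * Real.exp (t i))

lemma Flim_sum [Nonempty V] {pv : V → ℝ} (hp : ∀ i, 0 ≤ pv i) {x y : V} (hx : 0 < pv x)
    (t : V → ℝ) : ∑ T ∈ STrees (aug G), Flim G β pv x y T t = h1 G β pv x y t *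
      (Real.exp (Real.log (∑ i, pv i * Real.exp (t i)) / 2) *
        Real.exp (-(Real.exp (Real.log (∑ i, pv i * Real.exp (t i))) / 2))) := by
  have hS0 := sum_exp_pos hp hx t
  have hw : ∑ T ∈ STrees (aug G), wT β pv t T * 0 ^ ((roots T).card - 1) =
      (∑ i, pv i * Real.exp (t i)) * treeSum G β t x := by
    rw [← sum_single_root, Finset.sum_filter]
    refine Finset.sum_congr rfl fun T hT => ?_
    have : 1 ≤ (roots T).card := Finset.card_pos.mpr (roots_nonempty hT)
    split_ifs with h
    · simp [h]
    · rw [zero_pow (by omega), mul_zero]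
  simp only [Flim]
  rw [← Finset.mul_sum, hw, h1, Qf, Real.exp_half, Real.exp_log hS0, Real.sqrt_mul hS0.le]
  set S := ∑ i, pv i * Real.exp (t i)
  generalize Real.exp (-(S / 2)) = w
  rw [one_div, mul_inv, div_eq_mul_inv, div_eq_mul_inv]
  have h4 : (√S)⁻¹ * S⁻¹ * S = S⁻¹ * √S := by
    rw [mul_assoc, inv_mul_cancel₀ hS0.ne', mul_one, inv_mul_eq_div, Real.sqrt_div_self', one_div]
  linear_combination ((∏ j, Real.exp (-t j)) * ((√(2 * π)) ^ Fintype.card V)⁻¹ *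
    Real.exp (-E0 G β t) * (√((Amat G β t).adjugate x x))⁻¹ * w *
    Real.exp (t x + t y) * treeSum G β t x) * h4

lemma measurable_h1 (pv : V → ℝ) (x y : V) : Measurable (h1 G β pv x y) := by
  have := measurable_Qf (G := G) (β := β) x
  unfold h1; fun_prop

lemma h1_pos (hG : G.Connected) (hβ : ∀ i j, β i j = β j i)
    (hβp : ∀ i j, G.Adj i j → 0 < β i j) {pv : V → ℝ} (hp : ∀ i, 0 ≤ pv i) {x : V}
    (hx : 0 < pv x) (y : V) (t : V → ℝ) : 0 < h1 G β pv x y t := by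
  have h2 := sum_exp_pos hp hx t
  have := Qf_pos hG hβ hβp x t
  unfold h1; positivity

lemma sum_exp_shift (pv t : V → ℝ) (c : ℝ) :
    ∑ i, pv i * Real.exp (t i + c) = Real.exp c * ∑ i, pv i * Real.exp (t i) := by
  rw [Finset.mul_sum]
  exact Finset.sum_congr rfl fun i _ => by rw [Real.exp_add]; ring

lemma h1_shift [Nonempty V] (hβ : ∀ i j, β i j = β j i) (pv : V → ℝ) (x y : V) (t : V → ℝ)
    (c : ℝ) : h1 G β pv x y (fun i => t i + c) = h1 G β pv x y t := by
  rw [h1, h1, Qf_shift hβ, sum_exp_shift, show t x + c + (t y + c) = c + c + (t x + t y) by ring,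
    Real.exp_add, Real.exp_add c c, Real.exp_neg]
  have := Real.exp_pos c
  rw [mul_assoc (Real.exp c), mul_div_mul_left _ _ this.ne']
  field_simp

/-- The total pinning of two distinct vertices is at most that of all vertices. -/
lemma h1_le_hS (hG : G.Connected) (hβ : ∀ i j, β i j = β j i)
    (hβp : ∀ i j, G.Adj i j → 0 < β i j) {pv : V → ℝ} (hp : ∀ i, 0 ≤ pv i) {x y : V}
    (hxy : x ≠ y) (hx : 0 < pv x) (t : V → ℝ) : h1 G β pv x y t ≤ hS G β pv x y t := by
  have h2 : pv x * Real.exp (t x) + pv y * Real.exp (t y) ≤ ∑ i, pv i * Real.exp (t i) :=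
    Finset.add_le_sum (f := fun i => pv i * Real.exp (t i))
      (fun i _ => mul_nonneg (hp i) (Real.exp_pos _).le) (Finset.mem_univ x)
      (Finset.mem_univ y) hxy
  have := (Qf_pos hG hβ hβp x t).le
  have h3 : 0 < pv x * Real.exp (t x) + pv y * Real.exp (t y) :=
    add_pos_of_pos_of_nonneg (by positivity) (mul_nonneg (hp y) (Real.exp_pos _).le)
  unfold h1 hS
  gcongr

/-- The first limit, as an integral against a total zero-mode profile in `log ∑ π_i e^{t_i}`. -/
lemma first_limit [Nonempty V] (hG : G.Connected) (hβ : ∀ i j, β i j = β j i)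
    (hβp : ∀ i j, G.Adj i j → 0 < β i j) {pv : V → ℝ} (hp : ∀ i, 0 ≤ pv i) {x y : V}
    (hx : 0 < pv x) (hy : 0 < pv y) :
    Integrable (fun t => h1 G β pv x y t *
      (Real.exp (Real.log (∑ i, pv i * Real.exp (t i)) / 2) *
        Real.exp (-(Real.exp (Real.log (∑ i, pv i * Real.exp (t i))) / 2)))) ∧
    Tendsto (fun ε : ℝ => ε * expect G β (pinOf pv ε)
      (fun t _ _ => Gfun G β (pinOf pv ε) t x y)) (𝓝[>] 0)
      (𝓝 (∫ t, h1 G β pv x y t *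
      (Real.exp (Real.log (∑ i, pv i * Real.exp (t i)) / 2) *
        Real.exp (-(Real.exp (Real.log (∑ i, pv i * Real.exp (t i))) / 2))))) := by
  have hmem : Set.Ioc (0 : ℝ) 1 ∈ 𝓝[>] (0 : ℝ) := Ioc_mem_nhdsGT one_pos
  have key : ∀ T ∈ STrees (aug G), Integrable (Flim G β pv x y T) ∧
      Tendsto (fun ε => ∫ t, Fd G β pv x y T ε t) (𝓝[>] 0) (𝓝 (∫ t, Flim G β pv x y T t)) := by
    intro T hT
    obtain ⟨g, hg, hle⟩ := Fd_le hG hβ hβp hp hx hy hT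
    have hlim := fun t => Fd_tendsto (y := y) hG hβ hβp hp hx hT t
    refine ⟨hg.mono' (measurable_Flim pv x y T).aestronglyMeasurable (ae_of_all _ fun t => ?_),
      tendsto_integral_filter_of_dominated_convergence g
        (Eventually.of_forall fun ε => (measurable_Fd pv x y T ε).aestronglyMeasurable) ?_ hg
        (ae_of_all _ hlim)⟩
    · refine le_of_tendsto (hlim t).norm ?_
      filter_upwards [hmem] with ε hε
      exact hle ε hε.1 hε.2 t
    · filter_upwards [hmem] with ε hε
      exact ae_of_all _ fun t => hle ε hε.1 hε.2 t
  simp only [← Flim_sum (G := G) (β := β) hp (y := y) hx]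
  refine ⟨integrable_finsetSum _ fun T hT => (key T hT).1, ?_⟩
  rw [integral_finsetSum _ fun T hT => (key T hT).1]
  refine (tendsto_finsetSum _ fun T hT => (key T hT).2).congr' ?_
  filter_upwards [hmem] with ε hε
  exact (expect_eq hG hβ hβp hp hx hy hε.1 hε.2).symm

/-- Gauge exchange replaces the zero-mode profile of the limit by that of a single-vertex
pinning. -/
lemma limit_le [Nonempty V] (hG : G.Connected) (hβ : ∀ i j, β i j = β j i)
    (hβp : ∀ i j, G.Adj i j → 0 < β i j) {pv : V → ℝ} (hp : ∀ i, 0 ≤ pv i) {x y : V}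
    (hxy : x ≠ y) (hx : 0 < pv x) (hy : 0 < pv y) :
    ∫ t, h1 G β pv x y t *
      (Real.exp (Real.log (∑ i, pv i * Real.exp (t i)) / 2) *
        Real.exp (-(Real.exp (Real.log (∑ i, pv i * Real.exp (t i))) / 2))) ≤
    ∫ t, hS G β pv x y t * psi 1 (t x) := by
  have hm1 := measurable_h1 (G := G) (β := β) pv x y
  have hmp := measurable_psi 1
  have h0 := fun t => (h1_pos hG hβ hβp hp hx y t).le
  have hI := (expect_single hG hβ hβp hp (z := x) hy one_pos).1
  set k : ℝ → ℝ := fun r => Real.exp (r / 2) * Real.exp (-(Real.exp r / 2)) with hk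
  set l : (V → ℝ) → ℝ := fun t => Real.log (∑ i, pv i * Real.exp (t i)) with hl
  have hml : Measurable l := by rw [hl]; fun_prop
  have hg := gauge_exchange (h := fun t => ENNReal.ofReal (h1 G β pv x y t)) (by fun_prop)
    (fun t c => by simp only [h1_shift hβ]) (l := l) (m := fun t => t x) hml (measurable_pi_apply x)
    (fun t c => by
      simp only [hl]
      rw [sum_exp_shift, Real.log_mul (Real.exp_pos c).ne' (sum_exp_pos hp hx t).ne',
        Real.log_exp, add_comm])
    (fun t c => rfl)
    (φ := fun r => ENNReal.ofReal (k r)) (ψ := fun r => ENNReal.ofReal (psi 1 r))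
    (by fun_prop) hmp.ennreal_ofReal
  rw [show (∫⁻ r, ENNReal.ofReal (k r)) = _ from lintegral_kfun,
    show (∫⁻ r, ENNReal.ofReal (psi 1 r)) = _ from lintegral_psi one_pos] at hg
  replace hg := (ENNReal.mul_right_inj (by simp [Real.pi_pos]) ENNReal.ofReal_ne_top).mp hg
  have e1 : ∫ t, h1 G β pv x y t * k (l t) = ∫ t, h1 G β pv x y t * psi 1 (t x) := by
    rw [integral_eq_lintegral_of_nonneg_ae
      (ae_of_all _ fun t => mul_nonneg (h0 t) (by rw [hk]; positivity)) (by fun_prop),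
      integral_eq_lintegral_of_nonneg_ae
      (ae_of_all _ fun t => mul_nonneg (h0 t) (psi_nonneg 1 _)) (by fun_prop)]
    simp only [ENNReal.ofReal_mul (h0 _)]
    rw [hg]
  change ∫ t, h1 G β pv x y t * k (l t) ≤ _
  rw [e1]
  exact integral_mono_of_nonneg (ae_of_all _ fun t => mul_nonneg (h0 t) (psi_nonneg 1 _)) hI
    (ae_of_all _ fun t =>
      mul_le_mul_of_nonneg_right (h1_le_hS hG hβ hβp hp hxy hx t) (psi_nonneg 1 _))

end Limit

/-- main comparison theorem: with pinning `ε = (π_i ε)_{i∈V}`, both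
`lim_{ε↓0} ε E_{μ^ε}[G^ε_{xy}]` and
`lim_{ε↓0} (E_{μ^{ε_xδ_x}}[O^π_{xy}] + E_{μ^{ε_yδ_y}}[O^π_{yx}])` exist (as real numbers,
which encodes finiteness of the second) and
`0 < lim_{ε↓0} ε E_{μ^ε}[G^ε_{xy}]
   ≤ lim_{ε↓0} (E_{μ^{ε_xδ_x}}[O^π_{xy}] + E_{μ^{ε_yδ_y}}[O^π_{yx}])`. -/
theorem stmt_6 {V : Type*} [Fintype V] [DecidableEq V]
    (G : SimpleGraph V) (hG : G.Connected)
    (β : V → V → ℝ) (hβsymm : ∀ i j, β i j = β j i)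
    (hβpos : ∀ i j, G.Adj i j → 0 < β i j)
    (x y : V) (hxy : x ≠ y)
    (pv : V → ℝ) (hpv : ∀ i, 0 ≤ pv i) (hpx : 0 < pv x) (hpy : 0 < pv y) :
    ∃ L L' : ℝ,
      Filter.Tendsto
        (fun ε : ℝ => ε * expect G β (pinOf pv ε)
          (fun t _ _ => Gfun G β (pinOf pv ε) t x y))
        (𝓝[>] (0 : ℝ)) (𝓝 L) ∧
      Filter.Tendsto
        (fun ε : ℝ =>
          expect G β (singlePin x (pv x * ε)) (fun t _ T => obs pv x y t T) +
          expect G β (singlePin y (pv y * ε)) (fun t _ T => obs pv y x t T))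
        (𝓝[>] (0 : ℝ)) (𝓝 L') ∧
      0 < L ∧ L ≤ L' := by
  have : Nonempty V := ⟨x⟩
  obtain ⟨hI, hL⟩ := first_limit hG hβsymm hβpos hpv hpx hpy
  refine ⟨_, (∫ t, hS G β pv x y t * psi 1 (t x)) + ∫ t, hS G β pv y x t * psi 1 (t y), hL,
    tendsto_const_nhds.congr' ?_, ?_, ?_⟩
  · filter_upwards [self_mem_nhdsWithin] with ε hε
    have hx := mul_pos hpx (Set.mem_Ioi.mp hε)
    have hy := mul_pos hpy (Set.mem_Ioi.mp hε)
    rw [(expect_single hG hβsymm hβpos hpv hpy hx).2, (expect_single hG hβsymm hβpos hpv hpx hy).2,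
      single_const hG hβsymm hβpos hpv x y hx, single_const hG hβsymm hβpos hpv y x hy]
  · have hpos : ∀ t, 0 < h1 G β pv x y t *
        (Real.exp (Real.log (∑ i, pv i * Real.exp (t i)) / 2) *
        Real.exp (-(Real.exp (Real.log (∑ i, pv i * Real.exp (t i))) / 2))) := fun t =>
      mul_pos (h1_pos hG hβsymm hβpos hpv hpx y t) (by positivity)
    rw [integral_pos_iff_support_of_nonneg (fun t => (hpos t).le) hI,
      Function.support_eq_univ fun t => (hpos t).ne']
    exact Measure.measure_univ_pos.mpr (NeZero.ne _)
  · exact (limit_le hG hβsymm hβpos hpv hxy hpx hpy).trans (le_add_of_nonneg_right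
      (integral_nonneg fun t =>
        mul_nonneg (hS_nonneg hG hβsymm hβpos hpv y x t) (psi_nonneg 1 _)))

end H22
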